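/- Let p ≥ √3 and let u be a nonzero global Schwartz solution of the defocusing generalized KdV equation ∂_t u + ∂_x^3 u = ∂_x(|u|^{p-1} u). Then for every function x : ℝ → ℝ, sup_{t ∈ ℝ} ∫_ℝ |x − x(t)| (ρ(t,x) + e(t,x)) dx = ∞, where ρ(t,x) = u²(t,x) is the mass density and e(t,x) = ½ (∂_x u)²(t,x) + |u(t,x)|^{p+1}/(p+1) is the energy density. -/

import Mathlib

open MeasureTheory Real

/-! ### Nonlinearity -/

noncomputable def nlf (p y : ℝ) : ℝ := |y| ^ (p - 1) * y
noncomputable def nlF (p y : ℝ) : ℝ := |y| ^ (p + 1) / (p + 1)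

lemma nlF_hasDerivAt {p : ℝ} (hp : 1 < p) (y : ℝ) : HasDerivAt (nlF p) (nlf p y) y := by
  have h := (hasDerivAt_abs_rpow y (p := p + 1) (by linarith)).div_const (p + 1)
  have h2 : (p + 1) * |y| ^ (p + 1 - 2) * y / (p + 1) = nlf p y := by
    have : p + 1 ≠ 0 := by linarith
    rw [nlf, show p + 1 - 2 = p - 1 by ring]
    field_simp
  rw [h2] at h
  exact h

lemma nlf_hasDerivAt {p : ℝ} (hp : 1 < p) (y : ℝ) :
    HasDerivAt (nlf p) (p * |y| ^ (p - 1)) y := by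
  rcases lt_trichotomy y 0 with hy | hy | hy
  · have h1 : HasDerivAt (fun z : ℝ => -((-z) ^ p)) (p * |y| ^ (p - 1)) y := by
      have := ((hasDerivAt_neg y).rpow_const (p := p) (Or.inl (by linarith : -y ≠ 0))).neg
      rw [abs_of_neg hy]
      refine this.congr_deriv ?_
      ring
    refine h1.congr_of_eventuallyEq ?_
    filter_upwards [gt_mem_nhds hy] with z hz
    have hz' : 0 < -z := by linarith
    rw [nlf, abs_of_neg hz, Real.rpow_sub_one hz'.ne']
    have : -z ≠ 0 := hz'.ne'
    have : z ≠ 0 := hz.ne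
    field_simp
  · subst hy
    have h0 : p * |(0:ℝ)| ^ (p - 1) = 0 := by
      rw [abs_zero, Real.zero_rpow (by linarith), mul_zero]
    rw [h0, hasDerivAt_iff_tendsto_slope]
    have hc : Continuous (fun y : ℝ => |y| ^ (p - 1)) :=
      continuous_abs.rpow_const (fun _ => Or.inr (by linarith))
    have ht : Filter.Tendsto (fun y : ℝ => |y| ^ (p - 1)) (nhdsWithin 0 {0}ᶜ) (nhds 0) := by
      have := hc.tendsto 0
      rw [abs_zero, Real.zero_rpow (by linarith)] at this
      exact this.mono_left nhdsWithin_le_nhds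
    refine ht.congr' ?_
    filter_upwards [self_mem_nhdsWithin] with z hz
    have hz' : z ≠ 0 := hz
    simp [slope_def_field, nlf, hz']
  · have h1 : HasDerivAt (fun z : ℝ => z ^ p) (p * |y| ^ (p - 1)) y := by
      rw [abs_of_pos hy]
      exact Real.hasDerivAt_rpow_const (Or.inl hy.ne')
    refine h1.congr_of_eventuallyEq ?_
    filter_upwards [lt_mem_nhds hy] with z hz
    rw [nlf, abs_of_pos hz, Real.rpow_sub_one hz.ne']
    have := hz.ne'
    field_simp

lemma nlf_continuous {p : ℝ} (hp : 1 < p) : Continuous (nlf p) :=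
  continuous_iff_continuousAt.2 fun y => (nlf_hasDerivAt hp y).continuousAt
lemma nlF_continuous {p : ℝ} (hp : 1 < p) : Continuous (nlF p) :=
  continuous_iff_continuousAt.2 fun y => (nlF_hasDerivAt hp y).continuousAt
lemma nlf'_continuous {p : ℝ} (hp : 1 < p) : Continuous (fun y : ℝ => p * |y| ^ (p - 1)) :=
  continuous_const.mul (continuous_abs.rpow_const (fun _ => Or.inr (by linarith)))

lemma nlF_nonneg {p : ℝ} (hp : 1 < p) (y : ℝ) : 0 ≤ nlF p y := by
  unfold nlF; positivity

lemma mul_nlf {p : ℝ} (hp : 1 < p) (y : ℝ) : y * nlf p y = (p + 1) * nlF p y := by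
  have h1 : p + 1 ≠ 0 := by linarith
  unfold nlf nlF
  rw [mul_div_cancel₀ _ h1]
  rcases eq_or_ne y 0 with rfl | hy
  · rw [abs_zero, Real.zero_rpow h1]; simp
  · have : |y| ^ (p + 1) = |y| ^ (p - 1) * |y| ^ (2:ℝ) := by
      rw [← Real.rpow_add (abs_pos.2 hy)]; congr 1; ring
    rw [this, Real.rpow_two, sq_abs]; ring

lemma nlf_lip {p : ℝ} (hp : 1 < p) (B : ℝ) (y z : ℝ) (hy : |y| ≤ B) (hz : |z| ≤ B) :
    |nlf p y - nlf p z| ≤ p * B ^ (p - 1) * |y - z| := by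
  have := (convex_Icc (-B) B).norm_image_sub_le_of_norm_hasDerivWithin_le (f := nlf p)
    (f' := fun y => p * |y| ^ (p - 1)) (C := p * B ^ (p - 1)) (x := z) (y := y)
    (fun x _ => (nlf_hasDerivAt hp x).hasDerivWithinAt) (fun x hx => by
      have hx' : |x| ≤ B := abs_le.2 hx
      rw [Real.norm_of_nonneg (by positivity)]
      gcongr) (abs_le.1 hz) (abs_le.1 hy)
  simpa using this

lemma nlf_abs_le {p : ℝ} (hp : 1 < p) (B : ℝ) (y : ℝ) (hy : |y| ≤ B) :
    |nlf p y| ≤ B ^ (p - 1) * |y| := by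
  rw [nlf, abs_mul, abs_of_nonneg (by positivity : (0:ℝ) ≤ |y| ^ (p - 1))]
  gcongr

lemma nlF_lip {p : ℝ} (hp : 1 < p) (B : ℝ) (y z : ℝ) (hy : |y| ≤ B) (hz : |z| ≤ B) :
    |nlF p y - nlF p z| ≤ B ^ (p - 1) * (|y| + |z|) * |y - z| := by
  have hm : ∀ x ∈ Set.uIcc z y, |x| ≤ |y| + |z| ∧ |x| ≤ B := by
    intro x hx
    have h1 : |x| ≤ max |z| |y| := by
      rcases Set.mem_uIcc.1 hx with h | h
      · exact abs_le_max_abs_abs h.1 h.2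
      · rw [max_comm]; exact abs_le_max_abs_abs h.1 h.2
    have h2 := abs_nonneg y
    have h3 := abs_nonneg z
    exact ⟨h1.trans (max_le (by linarith) (by linarith)), h1.trans (max_le hz hy)⟩
  have := (convex_uIcc z y).norm_image_sub_le_of_norm_hasDerivWithin_le (f := nlF p)
    (f' := fun y => nlf p y) (C := B ^ (p - 1) * (|y| + |z|)) (x := z) (y := y)
    (fun x _ => (nlF_hasDerivAt hp x).hasDerivWithinAt) (fun x hx => by
      obtain ⟨h1, h2⟩ := hm x hx
      rw [Real.norm_eq_abs]
      refine (nlf_abs_le hp B x h2).trans ?_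
      have : 0 ≤ B := (abs_nonneg _).trans h2
      gcongr) Set.left_mem_uIcc Set.right_mem_uIcc
  simpa using this

/-! ### Integral tools -/

lemma integrable_cs {g : ℝ → ℝ} (hg : Continuous g) {L : ℝ} (h : ∀ x, L < |x| → g x = 0) :
    Integrable g := by
  refine hg.integrable_of_hasCompactSupport
    (HasCompactSupport.intro (isCompact_Icc (a := -L) (b := L)) ?_)
  intro x hx
  apply h
  by_contra h'
  exact hx (abs_le.1 (not_lt.1 h'))

lemma integral_deriv_zero {G g : ℝ → ℝ} (hd : ∀ x, HasDerivAt G (g x) x) (hc : Continuous g)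
    {L : ℝ} (hG : ∀ x, L < |x| → G x = 0) (hg : ∀ x, L < |x| → g x = 0) : ∫ x, g x = 0 :=
  integral_eq_zero_of_hasDerivAt_of_integrable hd (integrable_cs hc hg)
    (integrable_cs (continuous_iff_continuousAt.2 fun y => (hd y).continuousAt) hG)

lemma param_cs_continuous {Θ : ℝ → ℝ → ℝ} (hc : Continuous (fun q : ℝ × ℝ => Θ q.1 q.2)) {L : ℝ}
    (h : ∀ t x, L < |x| → Θ t x = 0) : Continuous (fun t => ∫ x, Θ t x) := by
  have h1 : ∀ t, ∫ x, Θ t x = ∫ x in Set.Icc (-L) L, Θ t x := by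
    intro t
    rw [setIntegral_eq_integral_of_forall_compl_eq_zero]
    intro x hx
    apply h
    by_contra h'
    exact hx (abs_le.1 (not_lt.1 h'))
  simp_rw [h1]
  exact continuous_parametric_integral_of_continuous hc isCompact_Icc

lemma param_cs_hasDerivAt {Θ Θt : ℝ → ℝ → ℝ} (hc : Continuous (fun q : ℝ × ℝ => Θ q.1 q.2))
    (hct : Continuous (fun q : ℝ × ℝ => Θt q.1 q.2))
    (hd : ∀ t x, HasDerivAt (fun s => Θ s x) (Θt t x) t) {L : ℝ}
    (h : ∀ t x, L < |x| → Θ t x = 0) (ht : ∀ t x, L < |x| → Θt t x = 0) (t : ℝ) :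
    HasDerivAt (fun s => ∫ x, Θ s x) (∫ x, Θt t x) t := by
  obtain ⟨K, hK⟩ := ((isCompact_Icc (a := t - 1) (b := t + 1)).prod
    (isCompact_Icc (a := -L) (b := L))).exists_bound_of_continuousOn hct.continuousOn
  have hcx : ∀ s, Continuous (Θ s) := fun s => hc.comp (by fun_prop : Continuous fun x : ℝ => (s, x))
  have hcx' : ∀ s, Continuous (Θt s) :=
    fun s => hct.comp (by fun_prop : Continuous fun x : ℝ => (s, x))
  refine (hasDerivAt_integral_of_dominated_loc_of_deriv_le (s := Set.Icc (t - 1) (t + 1))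
    (bound := (Set.Icc (-L) L).indicator (fun _ => K))
    (Icc_mem_nhds (by linarith) (by linarith))
    (Filter.Eventually.of_forall fun s => (hcx s).aestronglyMeasurable)
    (integrable_cs (hcx t) (h t)) (hcx' t).aestronglyMeasurable ?_ ?_ ?_).2
  · refine Filter.Eventually.of_forall fun x s hs => ?_
    by_cases hx : x ∈ Set.Icc (-L) L
    · rw [Set.indicator_of_mem hx]
      exact hK (s, x) ⟨hs, hx⟩
    · rw [Set.indicator_of_notMem hx, ht s x, norm_zero]
      by_contra h'
      exact hx (abs_le.1 (not_lt.1 h'))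
  · exact (integrable_indicator_iff measurableSet_Icc).2 (by simp)
  · exact Filter.Eventually.of_forall fun x s _ => hd s x

lemma param_cs_ftc {Θ Θt : ℝ → ℝ → ℝ} (hc : Continuous (fun q : ℝ × ℝ => Θ q.1 q.2))
    (hct : Continuous (fun q : ℝ × ℝ => Θt q.1 q.2))
    (hd : ∀ t x, HasDerivAt (fun s => Θ s x) (Θt t x) t) {L : ℝ}
    (h : ∀ t x, L < |x| → Θ t x = 0) (ht : ∀ t x, L < |x| → Θt t x = 0) (a b : ℝ) :
    (∫ x, Θ b x) - ∫ x, Θ a x = ∫ t in a..b, ∫ x, Θt t x := by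
  rw [intervalIntegral.integral_eq_sub_of_hasDerivAt
    (fun t _ => param_cs_hasDerivAt hc hct hd h ht t)]
  exact (param_cs_continuous hct ht).intervalIntegrable _ _

/-! ### Solutions -/

structure Sol (p : ℝ) where
  u : ℝ → ℝ → ℝ
  ux : ℝ → ℝ → ℝ
  uxx : ℝ → ℝ → ℝ
  uxxx : ℝ → ℝ → ℝ
  ut : ℝ → ℝ → ℝ
  utx : ℝ → ℝ → ℝ
  cu : Continuous (fun q : ℝ × ℝ => u q.1 q.2)
  cux : Continuous (fun q : ℝ × ℝ => ux q.1 q.2)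
  cuxx : Continuous (fun q : ℝ × ℝ => uxx q.1 q.2)
  cuxxx : Continuous (fun q : ℝ × ℝ => uxxx q.1 q.2)
  cut : Continuous (fun q : ℝ × ℝ => ut q.1 q.2)
  cutx : Continuous (fun q : ℝ × ℝ => utx q.1 q.2)
  dx0 : ∀ t x, HasDerivAt (u t) (ux t x) x
  dx1 : ∀ t x, HasDerivAt (ux t) (uxx t x) x
  dx2 : ∀ t x, HasDerivAt (uxx t) (uxxx t x) x
  dt0 : ∀ t x, HasDerivAt (fun s => u s x) (ut t x) t
  dt1 : ∀ t x, HasDerivAt (fun s => ux s x) (utx t x) t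
  dxt : ∀ t x, HasDerivAt (ut t) (utx t x) x
  pde : ∀ t x, ut t x = -uxxx t x + p * |u t x| ^ (p - 1) * ux t x
  dec : ∀ t, ∃ K, ∀ x, |u t x| ≤ K / (1 + x ^ 2) ∧ |ux t x| ≤ K / (1 + x ^ 2) ∧
    |uxx t x| ≤ K / (1 + x ^ 2) ∧ |uxxx t x| ≤ K / (1 + x ^ 2)


lemma fderiv_slice {V : ℝ × ℝ → ℝ} (hV : ContDiff ℝ (⊤ : ℕ∞) V) :
    (∀ t x, HasDerivAt (fun y => V (t, y)) (fderiv ℝ V (t, x) (0, 1)) x) ∧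
    (∀ t x, HasDerivAt (fun s => V (s, x)) (fderiv ℝ V (t, x) (1, 0)) t) ∧
    ContDiff ℝ (⊤ : ℕ∞) (fun q => fderiv ℝ V q (0, 1)) ∧
    ContDiff ℝ (⊤ : ℕ∞) (fun q => fderiv ℝ V q (1, 0)) := by
  have hd : ∀ q, HasFDerivAt V (fderiv ℝ V q) q := fun q =>
    (hV.differentiable (by simp) q).hasFDerivAt
  refine ⟨fun t x => ?_, fun t x => ?_, ?_, ?_⟩
  · have h1 : HasDerivAt (fun y : ℝ => (t, y)) ((0 : ℝ), (1 : ℝ)) x :=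
      (hasDerivAt_const x t).prodMk (hasDerivAt_id x)
    exact (hd (t, x)).comp_hasDerivAt x h1
  · have h1 : HasDerivAt (fun s : ℝ => (s, x)) ((1 : ℝ), (0 : ℝ)) t :=
      (hasDerivAt_id t).prodMk (hasDerivAt_const t x)
    exact (hd (t, x)).comp_hasDerivAt t h1
  · exact (hV.fderiv_right (m := (⊤ : ℕ∞)) (by simp)).clm_apply contDiff_const
  · exact (hV.fderiv_right (m := (⊤ : ℕ∞)) (by simp)).clm_apply contDiff_const

lemma schwartz_dec (f : SchwartzMap ℝ ℝ) (n : ℕ) :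
    ∃ K, ∀ x, |iteratedDeriv n f x| ≤ K / (1 + x ^ 2) := by
  obtain ⟨C0, _, h0⟩ := f.decay 0 n
  obtain ⟨C2, _, h2⟩ := f.decay 2 n
  refine ⟨C0 + C2, fun x => ?_⟩
  have h0 := h0 x
  have h2 := h2 x
  rw [norm_iteratedFDeriv_eq_norm_iteratedDeriv, Real.norm_eq_abs] at h0 h2
  rw [le_div_iff₀ (by positivity)]
  simp only [pow_zero, one_mul, Real.norm_eq_abs, sq_abs] at h0 h2
  linarith

lemma exists_sol {p : ℝ} (hp : 1 < p)
    (u : ℝ → ℝ → ℝ)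
    (hsmooth : ContDiff ℝ (⊤ : ℕ∞) (fun q : ℝ × ℝ => u q.1 q.2))
    (hschwartz : ∀ t : ℝ, ∃ f : SchwartzMap ℝ ℝ, ∀ x : ℝ, u t x = f x)
    (hpde : ∀ t x : ℝ,
      deriv (fun s => u s x) t + iteratedDeriv 3 (fun y => u t y) x
        = deriv (fun y => |u t y| ^ (p - 1) * u t y) x) : ∃ S : Sol p, S.u = u := by
  set V : ℝ × ℝ → ℝ := fun q : ℝ × ℝ => u q.1 q.2 with hV
  obtain ⟨a1, a2, a3, a4⟩ := fderiv_slice hsmooth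
  obtain ⟨b1, b2, b3, b4⟩ := fderiv_slice a3
  obtain ⟨c1, c2, c3, c4⟩ := fderiv_slice b3
  obtain ⟨d1, d2, d3, d4⟩ := fderiv_slice a4
  set V1 : ℝ × ℝ → ℝ := fun q => fderiv ℝ V q (0, 1) with hV1
  set V2 : ℝ × ℝ → ℝ := fun q => fderiv ℝ V1 q (0, 1) with hV2
  set V3 : ℝ × ℝ → ℝ := fun q => fderiv ℝ V2 q (0, 1) with hV3
  set Vt : ℝ × ℝ → ℝ := fun q => fderiv ℝ V q (1, 0) with hVt
  set Vtx : ℝ × ℝ → ℝ := fun q => fderiv ℝ Vt q (0, 1) with hVtx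
  have hsymm : ∀ q, fderiv ℝ V1 q (1, 0) = Vtx q := by
    intro q
    have hs := (hsmooth.contDiffAt (x := q)).isSymmSndFDerivAt
      (by simp only [minSmoothness_of_isRCLikeNormedField]; exact WithTop.coe_le_coe.2 (le_top : (2 : ℕ∞) ≤ ⊤))
    have hdd : DifferentiableAt ℝ (fderiv ℝ V) q :=
      (hsmooth.fderiv_right (m := (⊤ : ℕ∞)) (by simp)).differentiable (by simp) q
    have e1 : fderiv ℝ V1 q (1, 0) = fderiv ℝ (fderiv ℝ V) q (1, 0) (0, 1) := by
      rw [hV1, fderiv_clm_apply hdd (differentiableAt_const _)]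
      simp
    have e2 : Vtx q = fderiv ℝ (fderiv ℝ V) q (0, 1) (1, 0) := by
      simp only [hVtx, hVt]
      rw [fderiv_clm_apply hdd (differentiableAt_const _)]
      simp
    rw [e1, e2]
    exact hs _ _
  have e0 : ∀ t, (fun y => u t y) = fun y => V (t, y) := fun t => rfl
  have e1 : ∀ t, deriv (fun y => u t y) = fun y => V1 (t, y) := fun t => funext fun x => (a1 t x).deriv
  have e2 : ∀ t, iteratedDeriv 2 (fun y => u t y) = fun y => V2 (t, y) := by
    intro t
    rw [iteratedDeriv_succ, iteratedDeriv_one, e1]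
    exact funext fun x => (b1 t x).deriv
  have e3 : ∀ t, iteratedDeriv 3 (fun y => u t y) = fun y => V3 (t, y) := by
    intro t
    rw [iteratedDeriv_succ, e2]
    exact funext fun x => (c1 t x).deriv
  refine ⟨{ u := u, ux := fun t x => V1 (t, x), uxx := fun t x => V2 (t, x),
            uxxx := fun t x => V3 (t, x), ut := fun t x => Vt (t, x), utx := fun t x => Vtx (t, x)
            cu := hsmooth.continuous, cux := a3.continuous, cuxx := b3.continuous
            cuxxx := c3.continuous, cut := a4.continuous, cutx := d3.continuous
            dx0 := a1, dx1 := b1, dx2 := c1, dt0 := a2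
            dt1 := fun t x => hsymm (t, x) ▸ b2 t x
            dxt := d1, pde := ?_, dec := ?_ }, rfl⟩
  · intro t x
    have h := hpde t x
    rw [(a2 t x).deriv, e3] at h
    have h2 : HasDerivAt (fun y => |u t y| ^ (p - 1) * u t y)
        (p * |u t x| ^ (p - 1) * V1 (t, x)) x :=
      (nlf_hasDerivAt hp (u t x)).comp x (a1 t x)
    rw [h2.deriv] at h
    linarith
  · intro t
    obtain ⟨f, hf⟩ := hschwartz t
    have hf' : (fun y => u t y) = f := funext hf
    obtain ⟨K0, h0⟩ := schwartz_dec f 0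
    obtain ⟨K1, h1⟩ := schwartz_dec f 1
    obtain ⟨K2, h2⟩ := schwartz_dec f 2
    obtain ⟨K3, h3⟩ := schwartz_dec f 3
    rw [← hf'] at h0 h1 h2 h3
    rw [iteratedDeriv_zero] at h0
    rw [iteratedDeriv_one, e1] at h1
    rw [e2] at h2
    rw [e3] at h3
    refine ⟨max (max K0 K1) (max K2 K3), fun x => ⟨?_, ?_, ?_, ?_⟩⟩
    · refine (h0 x).trans ?_; gcongr; simp
    · refine (h1 x).trans ?_; gcongr; simp
    · refine (h2 x).trans ?_; gcongr; simp
    · refine (h3 x).trans ?_; gcongr; simp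


/-! ### Cutoffs -/

structure Cut (B R : ℝ) where
  c : ℝ → ℝ
  c1 : ℝ → ℝ
  c2 : ℝ → ℝ
  c3 : ℝ → ℝ
  d0 : ∀ x, HasDerivAt c (c1 x) x
  d1 : ∀ x, HasDerivAt c1 (c2 x) x
  d2 : ∀ x, HasDerivAt c2 (c3 x) x
  cont : Continuous c
  cont1 : Continuous c1
  cont2 : Continuous c2
  cont3 : Continuous c3
  nn : ∀ x, 0 ≤ c x
  le1 : ∀ x, c x ≤ 1
  one : ∀ x, |x| ≤ R → c x = 1
  b1 : ∀ x, |c1 x| ≤ B / R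
  b2 : ∀ x, |c2 x| ≤ B / R
  b3 : ∀ x, |c3 x| ≤ B / R
  in1 : ∀ x, |x| ≤ R → c1 x = 0
  in2 : ∀ x, |x| ≤ R → c2 x = 0
  in3 : ∀ x, |x| ≤ R → c3 x = 0
  out : ∀ x, 2 * R < |x| → c x = 0
  out1 : ∀ x, 2 * R < |x| → c1 x = 0
  out2 : ∀ x, 2 * R < |x| → c2 x = 0
  out3 : ∀ x, 2 * R < |x| → c3 x = 0

lemma exists_cut : ∃ B : ℝ, 0 < B ∧ ∀ R : ℝ, 1 ≤ R → Nonempty (Cut B R) := by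
  let κ : ContDiffBump (0 : ℝ) := ⟨3 / 2, 2, by norm_num, by norm_num⟩
  have hk : ContDiff ℝ (⊤ : ℕ∞) (κ : ℝ → ℝ) := κ.contDiff
  have hk1 : ContDiff ℝ (⊤ : ℕ∞) (deriv κ) := by
    have := (contDiff_infty_iff_deriv (f := (κ : ℝ → ℝ))).1 hk
    exact this.2
  have hk2 : ContDiff ℝ (⊤ : ℕ∞) (deriv (deriv κ)) := (contDiff_infty_iff_deriv.1 hk1).2
  have hk3 : ContDiff ℝ (⊤ : ℕ∞) (deriv (deriv (deriv κ))) := (contDiff_infty_iff_deriv.1 hk2).2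
  have D : ∀ {g : ℝ → ℝ}, ContDiff ℝ (⊤ : ℕ∞) g → ∀ x, HasDerivAt g (deriv g x) x := fun hg x =>
    (hg.differentiable (by simp) x).hasDerivAt
  have hin : ∀ x : ℝ, |x| ≤ 1 → (κ : ℝ → ℝ) =ᶠ[nhds x] fun _ => 1 := by
    intro x hx
    have : ∀ᶠ y in nhds x, |y| < 3 / 2 :=
      continuous_abs.continuousAt.eventually (gt_mem_nhds (by linarith))
    filter_upwards [this] with y hy
    exact κ.one_of_mem_closedBall (by simpa using hy.le)
  have hout : ∀ x : ℝ, 2 < |x| → (κ : ℝ → ℝ) =ᶠ[nhds x] fun _ => 0 := by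
    intro x hx
    have : ∀ᶠ y in nhds x, 2 < |y| :=
      continuous_abs.continuousAt.eventually (lt_mem_nhds hx)
    filter_upwards [this] with y hy
    exact κ.zero_of_le_dist (by simpa using hy.le)
  have hc : ∀ {x a : ℝ}, (κ : ℝ → ℝ) =ᶠ[nhds x] (fun _ => a) →
      deriv κ x = 0 ∧ deriv (deriv κ) x = 0 ∧ deriv (deriv (deriv κ)) x = 0 := by
    intro x a h
    have h1 : deriv κ =ᶠ[nhds x] fun _ => 0 := by simpa using h.deriv
    have h2 : deriv (deriv κ) =ᶠ[nhds x] fun _ => 0 := by simpa using h1.deriv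
    have h3 : deriv (deriv (deriv κ)) =ᶠ[nhds x] fun _ => 0 := by simpa using h2.deriv
    exact ⟨h1.self_of_nhds, h2.self_of_nhds, h3.self_of_nhds⟩
  have hb : ∀ {g : ℝ → ℝ}, Continuous g → (∀ x, 2 < |x| → g x = 0) → ∃ B, 0 < B ∧ ∀ x, |g x| ≤ B := by
    intro g hg h
    obtain ⟨K, hK⟩ := (isCompact_Icc (a := (-2:ℝ)) (b := 2)).exists_bound_of_continuousOn hg.continuousOn
    refine ⟨|K| + 1, by positivity, fun x => ?_⟩
    by_cases hx : 2 < |x|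
    · rw [h x hx, abs_zero]; positivity
    · exact (hK x (abs_le.1 (not_lt.1 hx))).trans ((le_abs_self K).trans (by linarith))
  obtain ⟨B1, hB1, h1⟩ := hb hk1.continuous (fun x hx => (hc (hout x hx)).1)
  obtain ⟨B2, hB2, h2⟩ := hb hk2.continuous (fun x hx => (hc (hout x hx)).2.1)
  obtain ⟨B3, hB3, h3⟩ := hb hk3.continuous (fun x hx => (hc (hout x hx)).2.2)
  refine ⟨B1 + B2 + B3, by positivity, fun R hR => ?_⟩
  have hR0 : 0 < R := by linarith
  have hRi : R⁻¹ ≤ 1 := inv_le_one_of_one_le₀ hR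
  have hRi0 : 0 < R⁻¹ := by positivity
  have hs : ∀ x : ℝ, HasDerivAt (fun x : ℝ => x * R⁻¹) R⁻¹ x := fun x => by
    simpa using (hasDerivAt_id x).mul_const R⁻¹
  have habs : ∀ x : ℝ, |x * R⁻¹| = |x| * R⁻¹ := fun x => by rw [abs_mul, abs_of_pos hRi0]
  have h1' : ∀ x : ℝ, |x| ≤ R → |x * R⁻¹| ≤ 1 := fun x hx => by
    rw [habs, ← div_eq_mul_inv, div_le_one hR0]; exact hx
  have h2' : ∀ x : ℝ, 2 * R < |x| → 2 < |x * R⁻¹| := fun x hx => by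
    rw [habs, ← div_eq_mul_inv, lt_div_iff₀ hR0]; exact hx
  have hsc : Continuous (fun x : ℝ => x * R⁻¹) := by fun_prop
  exact ⟨{
    c := fun x => κ (x * R⁻¹)
    c1 := fun x => deriv κ (x * R⁻¹) * R⁻¹
    c2 := fun x => deriv (deriv κ) (x * R⁻¹) * R⁻¹ * R⁻¹
    c3 := fun x => deriv (deriv (deriv κ)) (x * R⁻¹) * R⁻¹ * R⁻¹ * R⁻¹
    d0 := fun x => HasDerivAt.comp (h₂ := (κ : ℝ → ℝ)) (h := fun x : ℝ => x * R⁻¹) x (D hk (x * R⁻¹)) (hs x)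
    d1 := fun x => ((D hk1 (x * R⁻¹)).comp x (hs x)).mul_const _
    d2 := fun x => (((D hk2 (x * R⁻¹)).comp x (hs x)).mul_const _).mul_const _
    cont := hk.continuous.comp hsc
    cont1 := (hk1.continuous.comp hsc).mul continuous_const
    cont2 := ((hk2.continuous.comp hsc).mul continuous_const).mul continuous_const
    cont3 := (((hk3.continuous.comp hsc).mul continuous_const).mul continuous_const).mul continuous_const
    nn := fun x => κ.nonneg
    le1 := fun x => κ.le_one
    one := fun x hx => (hin _ (h1' x hx)).self_of_nhds
    b1 := fun x => by
      rw [abs_mul, abs_of_pos hRi0, div_eq_mul_inv]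
      have := h1 (x * R⁻¹)
      gcongr; linarith
    b2 := fun x => by
      rw [abs_mul, abs_mul, abs_of_pos hRi0, div_eq_mul_inv]
      have := h2 (x * R⁻¹)
      have h5 : |deriv (deriv κ) (x * R⁻¹)| * R⁻¹ ≤ B2 * 1 := by gcongr
      gcongr; linarith
    b3 := fun x => by
      rw [abs_mul, abs_mul, abs_mul, abs_of_pos hRi0, div_eq_mul_inv]
      have := h3 (x * R⁻¹)
      have h5 : |deriv (deriv (deriv κ)) (x * R⁻¹)| * R⁻¹ * R⁻¹ ≤ B3 * 1 * 1 := by gcongr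
      gcongr; linarith
    in1 := fun x hx => by simp [(hc (hin _ (h1' x hx))).1]
    in2 := fun x hx => by simp [(hc (hin _ (h1' x hx))).2.1]
    in3 := fun x hx => by simp [(hc (hin _ (h1' x hx))).2.2]
    out := fun x hx => (hout _ (h2' x hx)).self_of_nhds
    out1 := fun x hx => by simp [(hc (hout _ (h2' x hx))).1]
    out2 := fun x hx => by simp [(hc (hout _ (h2' x hx))).2.1]
    out3 := fun x hx => by simp [(hc (hout _ (h2' x hx))).2.2] }⟩

lemma int_of_dec {g : ℝ → ℝ} (hg : Continuous g) {K : ℝ} (h : ∀ x, |g x| ≤ K / (1 + x ^ 2)) :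
    Integrable g := by
  refine (integrable_inv_one_add_sq.const_mul K).mono' hg.aestronglyMeasurable
    (Filter.Eventually.of_forall fun x => ?_)
  rw [← div_eq_mul_inv]
  exact h x

namespace Sol
variable {p : ℝ} (S : Sol p)

noncomputable def e (t x : ℝ) : ℝ := 1 / 2 * S.ux t x ^ 2 + nlF p (S.u t x)
noncomputable def den (t x : ℝ) : ℝ := S.u t x ^ 2 + S.e t x
noncomputable def w (t x : ℝ) : ℝ := -S.uxx t x + nlf p (S.u t x)
noncomputable def J (t x : ℝ) : ℝ := S.ux t x * S.ut t x + 1 / 2 * S.w t x ^ 2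
noncomputable def Mass (t : ℝ) : ℝ := ∫ x, S.u t x ^ 2
noncomputable def En (t : ℝ) : ℝ := ∫ x, S.e t x

lemma cuf (hp : 1 < p) : Continuous (fun q : ℝ × ℝ => nlf p (S.u q.1 q.2)) :=
  (nlf_continuous hp).comp S.cu
lemma cuF (hp : 1 < p) : Continuous (fun q : ℝ × ℝ => nlF p (S.u q.1 q.2)) :=
  (nlF_continuous hp).comp S.cu
lemma ce (hp : 1 < p) : Continuous (fun q : ℝ × ℝ => S.e q.1 q.2) :=
  (continuous_const.mul (S.cux.pow 2)).add (S.cuF hp)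
lemma cden (hp : 1 < p) : Continuous (fun q : ℝ × ℝ => S.den q.1 q.2) :=
  (S.cu.pow 2).add (S.ce hp)
lemma cw (hp : 1 < p) : Continuous (fun q : ℝ × ℝ => S.w q.1 q.2) :=
  S.cuxx.neg.add (S.cuf hp)
lemma cJ (hp : 1 < p) : Continuous (fun q : ℝ × ℝ => S.J q.1 q.2) :=
  (S.cux.mul S.cut).add (continuous_const.mul ((S.cw hp).pow 2))

lemma sl {g : ℝ → ℝ → ℝ} (hg : Continuous (fun q : ℝ × ℝ => g q.1 q.2)) (t : ℝ) :
    Continuous (g t) := hg.comp (by fun_prop : Continuous fun x : ℝ => (t, x))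

lemma dxf (hp : 1 < p) (t x : ℝ) : HasDerivAt (fun y => nlf p (S.u t y))
    (p * |S.u t x| ^ (p - 1) * S.ux t x) x := (nlf_hasDerivAt hp (S.u t x)).comp x (S.dx0 t x)
lemma dxF (hp : 1 < p) (t x : ℝ) : HasDerivAt (fun y => nlF p (S.u t y))
    (nlf p (S.u t x) * S.ux t x) x := (nlF_hasDerivAt hp (S.u t x)).comp x (S.dx0 t x)
lemma dtF (hp : 1 < p) (t x : ℝ) : HasDerivAt (fun s => nlF p (S.u s x))
    (nlf p (S.u t x) * S.ut t x) t :=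
  HasDerivAt.comp (h₂ := nlF p) t (nlF_hasDerivAt hp (S.u t x)) (S.dt0 t x)
lemma dxw (hp : 1 < p) (t x : ℝ) : HasDerivAt (S.w t) (S.ut t x) x := by
  have := (S.dx2 t x).neg.add (S.dxf hp t x)
  rw [← S.pde] at this
  exact this

lemma e_nonneg (hp : 1 < p) (t x : ℝ) : 0 ≤ S.e t x := by
  have := nlF_nonneg hp (S.u t x)
  unfold e; positivity
lemma den_nonneg (hp : 1 < p) (t x : ℝ) : 0 ≤ S.den t x := by
  have := S.e_nonneg hp t x
  unfold den; positivity

lemma nlF_le_sq (hp : 1 < p) {B y : ℝ} (hy : |y| ≤ B) : nlF p y ≤ B ^ (p - 1) * y ^ 2 := by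
  have h1 := mul_nlf hp y
  have h2 := nlf_abs_le hp B y hy
  have h3 := nlF_nonneg hp y
  have h4 : y * nlf p y ≤ |y| * (B ^ (p - 1) * |y|) := by
    refine (le_abs_self _).trans ?_
    rw [abs_mul]; gcongr
  have h5 : |y| * (B ^ (p - 1) * |y|) = B ^ (p - 1) * y ^ 2 := by
    rw [← sq_abs y]; ring
  nlinarith

lemma den_dec (hp : 1 < p) (t : ℝ) : ∃ K, ∀ x, (1 + |x|) * S.den t x ≤ K / (1 + x ^ 2) := by
  obtain ⟨K, hK⟩ := S.dec t
  have hK0 : 0 ≤ K := by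
    have h := (abs_nonneg _).trans (hK 0).1
    simpa using h
  refine ⟨2 * (K ^ 2 + (1 / 2 * K ^ 2 + K ^ (p - 1) * K ^ 2)), fun x => ?_⟩
  obtain ⟨h1, h2, -, -⟩ := hK x
  have hx : 0 < 1 + x ^ 2 := by positivity
  have hle : K / (1 + x ^ 2) ≤ K := div_le_self hK0 (by nlinarith [sq_nonneg x])
  have hF := nlF_le_sq hp (h1.trans hle)
  have s1 : S.u t x ^ 2 ≤ (K / (1 + x ^ 2)) ^ 2 := by rw [← sq_abs]; gcongr
  have s2 : S.ux t x ^ 2 ≤ (K / (1 + x ^ 2)) ^ 2 := by rw [← sq_abs]; gcongr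
  have hd : S.den t x ≤ (K ^ 2 + (1 / 2 * K ^ 2 + K ^ (p - 1) * K ^ 2)) / (1 + x ^ 2) ^ 2 := by
    have hKp : 0 ≤ K ^ (p - 1) := by positivity
    calc S.den t x ≤ (K / (1 + x ^ 2)) ^ 2 + (1 / 2 * (K / (1 + x ^ 2)) ^ 2
          + K ^ (p - 1) * (K / (1 + x ^ 2)) ^ 2) := by
          unfold den e
          have := mul_le_mul_of_nonneg_left s1 hKp
          linarith
      _ = _ := by field_simp
  have hxx : 1 + |x| ≤ 2 * (1 + x ^ 2) := by
    have := sq_abs x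
    nlinarith [sq_nonneg (|x| - 1), abs_nonneg x]
  calc (1 + |x|) * S.den t x ≤ (2 * (1 + x ^ 2)) *
        ((K ^ 2 + (1 / 2 * K ^ 2 + K ^ (p - 1) * K ^ 2)) / (1 + x ^ 2) ^ 2) := by
        gcongr
        exact S.den_nonneg hp t x
    _ = _ := by field_simp

lemma int_wden (hp : 1 < p) (t : ℝ) : Integrable (fun x => (1 + |x|) * S.den t x) := by
  obtain ⟨K, hK⟩ := S.den_dec hp t
  refine int_of_dec (K := K) ?_ fun x => ?_
  · exact (continuous_const.add continuous_abs).mul (sl (S.cden hp) t)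
  · rw [abs_of_nonneg (mul_nonneg (by positivity) (S.den_nonneg hp t x))]
    exact hK x

/-- anything continuous dominated by `A (1+|x|) den` is integrable -/
lemma int_of_le (hp : 1 < p) (t A : ℝ) {g : ℝ → ℝ} (hg : Continuous g)
    (h : ∀ x, |g x| ≤ A * ((1 + |x|) * S.den t x)) : Integrable g :=
  ((S.int_wden hp t).const_mul A).mono' hg.aestronglyMeasurable (Filter.Eventually.of_forall h)

lemma le_wden (hp : 1 < p) (t x : ℝ) : S.den t x ≤ (1 + |x|) * S.den t x := by
  have := S.den_nonneg hp t x
  nlinarith [abs_nonneg x]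

lemma int_u2 (hp : 1 < p) (t : ℝ) : Integrable (fun x => S.u t x ^ 2) := by
  refine S.int_of_le hp t 1 ((sl S.cu t).pow 2) fun x => ?_
  rw [one_mul, abs_of_nonneg (by positivity)]
  refine le_trans ?_ (S.le_wden hp t x)
  have := S.e_nonneg hp t x
  unfold den; linarith

lemma int_ux2 (hp : 1 < p) (t : ℝ) : Integrable (fun x => S.ux t x ^ 2) := by
  refine S.int_of_le hp t 2 ((sl S.cux t).pow 2) fun x => ?_
  rw [abs_of_nonneg (by positivity)]
  have := S.le_wden hp t x
  have := nlF_nonneg hp (S.u t x)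
  unfold den e at *; nlinarith [sq_nonneg (S.u t x)]

lemma int_F (hp : 1 < p) (t : ℝ) : Integrable (fun x => nlF p (S.u t x)) := by
  refine S.int_of_le hp t 1 (sl (g := fun t x => nlF p (S.u t x)) (S.cuF hp) t) fun x => ?_
  have h := nlF_nonneg hp (S.u t x)
  rw [one_mul, abs_of_nonneg h]
  refine le_trans ?_ (S.le_wden hp t x)
  unfold den e; nlinarith [sq_nonneg (S.u t x), sq_nonneg (S.ux t x)]

lemma int_e (hp : 1 < p) (t : ℝ) : Integrable (fun x => S.e t x) :=
  ((S.int_ux2 hp t).const_mul _).add (S.int_F hp t)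

lemma int_den (hp : 1 < p) (t : ℝ) : Integrable (fun x => S.den t x) :=
  (S.int_u2 hp t).add (S.int_e hp t)

end Sol


lemma ibp {A B G : ℝ → ℝ} (hd : ∀ x, HasDerivAt G (A x - B x) x) (hA : Continuous A)
    (hB : Continuous B) {L : ℝ} (sA : ∀ x, L < |x| → A x = 0) (sB : ∀ x, L < |x| → B x = 0)
    (sG : ∀ x, L < |x| → G x = 0) : ∫ x, A x = ∫ x, B x := by
  have h := integral_deriv_zero hd (hA.sub hB) sG (fun x hx => by rw [sA x hx, sB x hx, sub_zero])
  rw [integral_sub (integrable_cs hA sA) (integrable_cs hB sB)] at h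
  linarith

namespace Sol
variable {p : ℝ} (S : Sol p)

lemma pde_test (hp : 1 < p) (t : ℝ) {z z1 z2 z3 : ℝ → ℝ} (d0 : ∀ x, HasDerivAt z (z1 x) x)
    (d1 : ∀ x, HasDerivAt z1 (z2 x) x) (d2 : ∀ x, HasDerivAt z2 (z3 x) x) (c : Continuous z)
    (c1 : Continuous z1) (c3 : Continuous z3) {L : ℝ} (s0 : ∀ x, L < |x| → z x = 0)
    (s1 : ∀ x, L < |x| → z1 x = 0) (s2 : ∀ x, L < |x| → z2 x = 0) (s3 : ∀ x, L < |x| → z3 x = 0) :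
    ∫ x, z x * S.ut t x = ∫ x, (z3 x * S.u t x - z1 x * nlf p (S.u t x)) := by
  have cf : Continuous (fun x => nlf p (S.u t x)) := sl (g := fun t x => nlf p (S.u t x)) (S.cuf hp) t
  refine ibp (G := fun x => z x * S.w t x + (z1 x * S.ux t x - z2 x * S.u t x)) (L := L)
    (fun x => ?_) (c.mul (sl S.cut t)) ((c3.mul (sl S.cu t)).sub (c1.mul cf)) ?_ ?_ ?_
  · refine (((d0 x).mul (S.dxw hp t x)).add (((d1 x).mul (S.dx1 t x)).sub
      ((d2 x).mul (S.dx0 t x)))).congr_deriv ?_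
    unfold w; ring
  · intro x hx; simp [s0 x hx]
  · intro x hx; simp [s1 x hx, s3 x hx]
  · intro x hx; simp [s0 x hx, s1 x hx, s2 x hx]

lemma mass_flux (hp : 1 < p) (t : ℝ) {z z1 z2 : ℝ → ℝ} (d0 : ∀ x, HasDerivAt z (z1 x) x)
    (d1 : ∀ x, HasDerivAt z1 (z2 x) x) (c : Continuous z)
    (c1 : Continuous z1) (c2 : Continuous z2) {L : ℝ} (s0 : ∀ x, L < |x| → z x = 0)
    (s1 : ∀ x, L < |x| → z1 x = 0) (s2 : ∀ x, L < |x| → z2 x = 0) :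
    ∫ x, z x * (2 * S.u t x * S.ut t x) = ∫ x, -(z1 x * (3 * S.ux t x ^ 2
      + 2 * p * nlF p (S.u t x)) + 2 * z2 x * (S.u t x * S.ux t x)) := by
  have cF : Continuous (fun x => nlF p (S.u t x)) := sl (g := fun t x => nlF p (S.u t x)) (S.cuF hp) t
  have cu := sl S.cu t
  have cux := sl S.cux t
  have cut := sl S.cut t
  refine ibp (G := fun x => 2 * (z x * (S.u t x * S.w t x)) + z x * S.ux t x ^ 2
    - 2 * (z x * nlF p (S.u t x)) + 2 * (z1 x * (S.u t x * S.ux t x))) (L := L)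
    (fun x => ?_) (by fun_prop) (by fun_prop) ?_ ?_ ?_
  · refine (((((d0 x).mul ((S.dx0 t x).mul (S.dxw hp t x))).const_mul 2).add
      ((d0 x).mul ((S.dx1 t x).pow 2))).sub (((d0 x).mul (S.dxF hp t x)).const_mul 2)
      |>.add (((d1 x).mul ((S.dx0 t x).mul (S.dx1 t x))).const_mul 2)).congr_deriv ?_
    have := mul_nlf hp (S.u t x)
    simp only [w, Pi.mul_apply, Pi.pow_apply]
    push_cast
    linear_combination (2 * z1 x) * this
  · intro x hx; simp [s0 x hx]
  · intro x hx; simp [s1 x hx, s2 x hx]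
  · intro x hx; simp [s0 x hx, s1 x hx]

lemma energy_flux (hp : 1 < p) (t : ℝ) {z z1 : ℝ → ℝ} (d0 : ∀ x, HasDerivAt z (z1 x) x)
    (c : Continuous z) (c1 : Continuous z1) {L : ℝ} (s0 : ∀ x, L < |x| → z x = 0)
    (s1 : ∀ x, L < |x| → z1 x = 0) :
    ∫ x, z x * (S.ux t x * S.utx t x + nlf p (S.u t x) * S.ut t x)
      = ∫ x, -(z1 x * S.J t x) := by
  have cf : Continuous (fun x => nlf p (S.u t x)) := sl (g := fun t x => nlf p (S.u t x)) (S.cuf hp) t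
  have cu := sl S.cu t
  have cux := sl S.cux t
  have cut := sl S.cut t
  have cutx := sl S.cutx t
  have cJ := sl (S.cJ hp) t
  refine ibp (G := fun x => z x * (S.ux t x * S.ut t x + 1 / 2 * S.w t x ^ 2)) (L := L)
    (fun x => ?_) (by fun_prop) (by fun_prop) ?_ ?_ ?_
  · refine ((d0 x).mul (((S.dx1 t x).mul (S.dxt t x)).add
      (((S.dxw hp t x).pow 2).const_mul (1 / 2)))).congr_deriv ?_
    simp only [w, J, Pi.mul_apply, Pi.pow_apply, Pi.add_apply]
    push_cast
    ring
  · intro x hx; simp [s0 x hx]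
  · intro x hx; simp [s1 x hx]
  · intro x hx; simp [s0 x hx]

lemma mass_cs (hp : 1 < p) {z z1 z2 : ℝ → ℝ} (d0 : ∀ x, HasDerivAt z (z1 x) x)
    (d1 : ∀ x, HasDerivAt z1 (z2 x) x) (c : Continuous z)
    (c1 : Continuous z1) (c2 : Continuous z2) {L : ℝ} (s0 : ∀ x, L < |x| → z x = 0)
    (s1 : ∀ x, L < |x| → z1 x = 0) (s2 : ∀ x, L < |x| → z2 x = 0) (a b : ℝ) :
    (∫ x, z x * S.u b x ^ 2) - ∫ x, z x * S.u a x ^ 2 = -∫ t in a..b, ∫ x, (z1 x * (3 * S.ux t x ^ 2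
      + 2 * p * nlF p (S.u t x)) + 2 * z2 x * (S.u t x * S.ux t x)) := by
  have cu := S.cu
  have cut := S.cut
  rw [param_cs_ftc (Θ := fun t x => z x * S.u t x ^ 2) (Θt := fun t x => z x * (2 * S.u t x * S.ut t x))
    (L := L) (by fun_prop) (by fun_prop)
    (fun t x => by
      refine (((S.dt0 t x).pow 2).const_mul (z x)).congr_deriv ?_
      push_cast; ring) (fun t x hx => by simp [s0 x hx]) (fun t x hx => by simp [s0 x hx]) a b,
    ← intervalIntegral.integral_neg]
  congr 1; ext t
  rw [S.mass_flux hp t d0 d1 c c1 c2 s0 s1 s2, integral_neg]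

lemma energy_cs (hp : 1 < p) {z z1 : ℝ → ℝ} (d0 : ∀ x, HasDerivAt z (z1 x) x)
    (c : Continuous z) (c1 : Continuous z1) {L : ℝ} (s0 : ∀ x, L < |x| → z x = 0)
    (s1 : ∀ x, L < |x| → z1 x = 0) (a b : ℝ) :
    (∫ x, z x * S.e b x) - ∫ x, z x * S.e a x = -∫ t in a..b, ∫ x, z1 x * S.J t x := by
  have ce := S.ce hp
  have cf := S.cuf hp
  have cux := S.cux
  have cut := S.cut
  have cutx := S.cutx
  rw [param_cs_ftc (Θ := fun t x => z x * S.e t x)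
    (Θt := fun t x => z x * (S.ux t x * S.utx t x + nlf p (S.u t x) * S.ut t x))
    (L := L) (by fun_prop) (by fun_prop)
    (fun t x => by
      refine (((((S.dt1 t x).pow 2).const_mul (1 / 2)).add (S.dtF hp t x)).const_mul (z x)).congr_deriv ?_
      push_cast; ring) (fun t x hx => by simp [s0 x hx]) (fun t x hx => by simp [s0 x hx]) a b,
    ← intervalIntegral.integral_neg]
  congr 1; ext t
  rw [S.energy_flux hp t d0 c c1 s0 s1, integral_neg]

/-- expansion of the energy flux -/
lemma flux_J (hp : 1 < p) (t : ℝ) {z z1 z2 : ℝ → ℝ} (d0 : ∀ x, HasDerivAt z (z1 x) x)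
    (d1 : ∀ x, HasDerivAt z1 (z2 x) x) (c : Continuous z)
    (c1 : Continuous z1) (c2 : Continuous z2) {L : ℝ} (s0 : ∀ x, L < |x| → z x = 0)
    (s1 : ∀ x, L < |x| → z1 x = 0) (s2 : ∀ x, L < |x| → z2 x = 0) :
    ∫ x, z x * S.J t x = ∫ x, (z x * (3 / 2 * S.uxx t x ^ 2 - 2 * (S.uxx t x * nlf p (S.u t x))
      + 1 / 2 * nlf p (S.u t x) ^ 2) + z2 x * (nlF p (S.u t x) - 1 / 2 * S.ux t x ^ 2)) := by
  have cf : Continuous (fun x => nlf p (S.u t x)) := sl (g := fun t x => nlf p (S.u t x)) (S.cuf hp) t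
  have cF : Continuous (fun x => nlF p (S.u t x)) := sl (g := fun t x => nlF p (S.u t x)) (S.cuF hp) t
  have cu := sl S.cu t
  have cux := sl S.cux t
  have cuxx := sl S.cuxx t
  have cJ := sl (S.cJ hp) t
  refine ibp (G := fun x => z x * (S.ux t x * S.w t x)
    - z1 x * (nlF p (S.u t x) - 1 / 2 * S.ux t x ^ 2)) (L := L)
    (fun x => ?_) (by fun_prop) (by fun_prop) ?_ ?_ ?_
  · refine (((d0 x).mul ((S.dx1 t x).mul (S.dxw hp t x))).sub ((d1 x).mul ((S.dxF hp t x).sub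
      (((S.dx1 t x).pow 2).const_mul (1 / 2))))).congr_deriv ?_
    simp only [w, J, Pi.mul_apply, Pi.pow_apply, Pi.sub_apply]
    push_cast
    ring
  · intro x hx; simp [s0 x hx]
  · intro x hx; simp [s0 x hx, s2 x hx]
  · intro x hx; simp [s0 x hx, s1 x hx]

lemma flux_ab (hp : 1 < p) (t : ℝ) {z z1 z2 : ℝ → ℝ} (d0 : ∀ x, HasDerivAt z (z1 x) x)
    (d1 : ∀ x, HasDerivAt z1 (z2 x) x) (c : Continuous z)
    (c1 : Continuous z1) (c2 : Continuous z2) {L : ℝ} (s0 : ∀ x, L < |x| → z x = 0)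
    (s1 : ∀ x, L < |x| → z1 x = 0) (s2 : ∀ x, L < |x| → z2 x = 0) :
    ∫ x, z x * -(S.uxx t x * nlf p (S.u t x)) = ∫ x, (z x * (p * |S.u t x| ^ (p - 1) * S.ux t x ^ 2)
      - z2 x * nlF p (S.u t x)) := by
  have cf : Continuous (fun x => nlf p (S.u t x)) := sl (g := fun t x => nlf p (S.u t x)) (S.cuf hp) t
  have cF : Continuous (fun x => nlF p (S.u t x)) := sl (g := fun t x => nlF p (S.u t x)) (S.cuF hp) t
  have cu := sl S.cu t
  have cux := sl S.cux t
  have cuxx := sl S.cuxx t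
  have cf' : Continuous (fun x => p * |S.u t x| ^ (p - 1)) := (nlf'_continuous hp).comp cu
  refine ibp (G := fun x => z1 x * nlF p (S.u t x) - z x * (S.ux t x * nlf p (S.u t x))) (L := L)
    (fun x => ?_) (by fun_prop) ((c.mul (cf'.mul (cux.pow 2))).sub (c2.mul cF)) ?_ ?_ ?_
  · refine (((d1 x).mul (S.dxF hp t x)).sub ((d0 x).mul ((S.dx1 t x).mul
      (S.dxf hp t x)))).congr_deriv ?_
    simp only [Pi.mul_apply]
    ring
  · intro x hx; simp [s0 x hx]
  · intro x hx; simp [s0 x hx, s2 x hx]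
  · intro x hx; simp [s0 x hx, s1 x hx]

lemma flux_ua (t : ℝ) {z z1 : ℝ → ℝ} (d0 : ∀ x, HasDerivAt z (z1 x) x)
    (c : Continuous z) (c1 : Continuous z1) {L : ℝ} (s0 : ∀ x, L < |x| → z x = 0)
    (s1 : ∀ x, L < |x| → z1 x = 0) :
    ∫ x, z x * -(S.u t x * S.uxx t x) = ∫ x, (z x * S.ux t x ^ 2 + z1 x * (S.u t x * S.ux t x)) := by
  have cu := sl S.cu t
  have cux := sl S.cux t
  have cuxx := sl S.cuxx t
  refine ibp (G := fun x => -(z x * (S.u t x * S.ux t x))) (L := L)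
    (fun x => ?_) (by fun_prop) (by fun_prop) ?_ ?_ ?_
  · refine ((d0 x).mul ((S.dx0 t x).mul (S.dx1 t x))).neg.congr_deriv ?_
    simp only [Pi.mul_apply]
    ring
  · intro x hx; simp [s0 x hx]
  · intro x hx; simp [s0 x hx, s1 x hx]
  · intro x hx; simp [s0 x hx]

end Sol


lemma eq_zero_of_le_div {X Q R0 : ℝ} (h : ∀ R, R0 ≤ R → |X| ≤ Q / R) : X = 0 := by
  have h1 : Filter.Tendsto (fun R : ℝ => Q / R) Filter.atTop (nhds 0) :=
    tendsto_const_nhds.div_atTop Filter.tendsto_id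
  have h2 : |X| ≤ 0 := ge_of_tendsto h1 ((Filter.eventually_ge_atTop R0).mono h)
  exact abs_eq_zero.1 (le_antisymm h2 (abs_nonneg _))

namespace Sol
variable {p : ℝ} (S : Sol p)

noncomputable def WD (t : ℝ) : ℝ := ∫ x, (1 + |x|) * S.den t x

def LB (I : Set ℝ) : Prop := ∃ K, 0 < K ∧ ∀ t ∈ I, S.WD t ≤ K

lemma int_abs_den (hp : 1 < p) (t a : ℝ) : Integrable (fun x => |x - a| * S.den t x) := by
  refine S.int_of_le hp t (1 + |a|) (((continuous_id.sub continuous_const).abs).mul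
    (sl (S.cden hp) t)) fun x => ?_
  have h := S.den_nonneg hp t x
  rw [abs_mul, abs_abs, abs_of_nonneg h, ← mul_assoc]
  gcongr
  have := abs_sub x a
  nlinarith [abs_nonneg x, abs_nonneg a]

lemma local_bound (hp : 1 < p) {C : ℝ} {x₀ : ℝ → ℝ}
    (hC : ∀ t, ∫ x, |x - x₀ t| * S.den t x ≤ C) {t0 y : ℝ} (hy : S.u t0 y ≠ 0) :
    ∃ I ∈ nhds t0, S.LB I := by
  set c := S.u t0 y ^ 2 / 2 with hc
  have hc0 : 0 < c := by positivity
  have h1 : ∀ᶠ q in nhds ((t0, y) : ℝ × ℝ), c < S.u q.1 q.2 ^ 2 :=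
    (S.cu.pow 2).continuousAt.eventually (lt_mem_nhds (by
      change _ < S.u t0 y ^ 2
      linarith [hc, hc0]))
  obtain ⟨δ0, hδ0, h2⟩ := Metric.eventually_nhds_iff.1 h1
  set δ := δ0 / 2 with hδ
  have hδp : 0 < δ := by positivity
  have h3 : ∀ s x, |s - t0| ≤ δ → |x - y| ≤ δ → c < S.u s x ^ 2 := by
    intro s x hs hx
    refine h2 (y := (s, x)) ?_
    rw [Prod.dist_eq, Real.dist_eq, Real.dist_eq]
    exact lt_of_le_of_lt (max_le hs hx) (by linarith)
  have hC0 : 0 ≤ C := le_trans (integral_nonneg fun x =>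
    mul_nonneg (abs_nonneg _) (S.den_nonneg hp 0 x)) (hC 0)
  set L := |y| + δ + C / (2 * δ * c) with hL
  have hL0 : 0 ≤ L := by positivity
  have hx0 : ∀ s, |s - t0| ≤ δ → |x₀ s| ≤ L := by
    intro s hs
    have hi : Integrable ((Set.Icc (y - δ) (y + δ)).indicator
        (fun _ : ℝ => (|y - x₀ s| - δ) * c)) :=
      (integrable_indicator_iff measurableSet_Icc).2 continuousOn_const.integrableOn_Icc
    have h4 : ∫ x, (Set.Icc (y - δ) (y + δ)).indicator (fun _ => (|y - x₀ s| - δ) * c) x ≤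
        ∫ x, |x - x₀ s| * S.den s x := by
      refine integral_mono hi
        (S.int_abs_den hp s _) fun x => ?_
      simp only
      by_cases hx : x ∈ Set.Icc (y - δ) (y + δ)
      · rw [Set.indicator_of_mem hx]
        have hxy : |x - y| ≤ δ := abs_le.2 ⟨by linarith [hx.1], by linarith [hx.2]⟩
        have h5 := h3 s x hs hxy
        have h6 : |y - x₀ s| ≤ |x - y| + |x - x₀ s| := by
          rw [abs_sub_comm x y]; exact abs_sub_le _ _ _
        have h7 : c ≤ S.den s x := by
          have := S.e_nonneg hp s x
          unfold den; linarith
        calc (|y - x₀ s| - δ) * c ≤ |x - x₀ s| * c := by gcongr; linarith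
          _ ≤ _ := by gcongr
      · rw [Set.indicator_of_notMem hx]
        exact mul_nonneg (abs_nonneg _) (S.den_nonneg hp s x)
    rw [integral_indicator measurableSet_Icc, setIntegral_const] at h4
    have h5 : volume.real (Set.Icc (y - δ) (y + δ)) = 2 * δ := by
      rw [Real.volume_real_Icc_of_le (by linarith)]; ring
    rw [h5, smul_eq_mul] at h4
    have h6 := h4.trans (hC s)
    have h7 : |y - x₀ s| - δ ≤ C / (2 * δ * c) := by
      rw [le_div_iff₀ (by positivity)]; linarith
    have h8 : |x₀ s| ≤ |y| + |y - x₀ s| := by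
      have := abs_sub_abs_le_abs_sub (x₀ s) y
      rw [abs_sub_comm] at this; linarith
    linarith
  obtain ⟨K1, hK1⟩ := ((isCompact_Icc (a := t0 - δ) (b := t0 + δ)).prod
    (isCompact_Icc (a := -(L + 1)) (b := L + 1))).exists_bound_of_continuousOn
    (f := fun q : ℝ × ℝ => (1 + |q.2|) * S.den q.1 q.2)
    ((continuous_const.add continuous_snd.abs).mul (S.cden hp)).continuousOn
  refine ⟨Set.Icc (t0 - δ) (t0 + δ), Icc_mem_nhds (by linarith) (by linarith),
    |(2 + L) * C + 2 * (L + 1) * K1| + 1, by positivity, fun s hs => ?_⟩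
  have hs' : |s - t0| ≤ δ := abs_le.2 ⟨by linarith [hs.1], by linarith [hs.2]⟩
  have hxs := hx0 s hs'
  have hind : Integrable ((Set.Icc (-(L + 1)) (L + 1)).indicator (fun _ : ℝ => K1)) :=
    (integrable_indicator_iff measurableSet_Icc).2 (by simp)
  have hm : S.WD s ≤ ∫ x, ((2 + L) * (|x - x₀ s| * S.den s x)
      + (Set.Icc (-(L + 1)) (L + 1)).indicator (fun _ => K1) x) := by
    refine integral_mono (S.int_wden hp s) (((S.int_abs_den hp s _).const_mul _).add hind)
      fun x => ?_
    simp only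
    have hd := S.den_nonneg hp s x
    by_cases hx : x ∈ Set.Icc (-(L + 1)) (L + 1)
    · rw [Set.indicator_of_mem hx]
      have := (le_abs_self _).trans (hK1 (s, x) ⟨hs, hx⟩)
      simp only at this
      have h9 : 0 ≤ (2 + L) * (|x - x₀ s| * S.den s x) := by positivity
      linarith
    · rw [Set.indicator_of_notMem hx, add_zero, ← mul_assoc]
      have hx' : L + 1 < |x| := by
        by_contra h'
        exact hx (abs_le.1 (not_lt.1 h'))
      have h9 := abs_sub_abs_le_abs_sub x (x₀ s)
      gcongr
      nlinarith
  rw [integral_add ((S.int_abs_den hp s _).const_mul _) hind, integral_const_mul,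
    integral_indicator measurableSet_Icc, setIntegral_const,
    Real.volume_real_Icc_of_le (by linarith), smul_eq_mul] at hm
  have h10 := mul_le_mul_of_nonneg_left (hC s) (by linarith : (0:ℝ) ≤ 2 + L)
  have h11 := le_abs_self ((2 + L) * C + 2 * (L + 1) * K1)
  linarith

lemma LB_compact (hp : 1 < p) {C : ℝ} {x₀ : ℝ → ℝ}
    (hC : ∀ t, ∫ x, |x - x₀ t| * S.den t x ≤ C) {I : Set ℝ} (hI : IsCompact I)
    (hne : ∀ t ∈ I, ∃ y, S.u t y ≠ 0) : S.LB I := by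
  refine hI.induction_on (p := S.LB) ⟨1, one_pos, by simp⟩ ?_ ?_ ?_
  · rintro s t hst ⟨K, hK, h⟩
    exact ⟨K, hK, fun τ hτ => h τ (hst hτ)⟩
  · rintro s t ⟨K, hK, h⟩ ⟨K', hK', h'⟩
    refine ⟨K + K', by positivity, ?_⟩
    rintro τ (hτ | hτ)
    · linarith [h τ hτ]
    · linarith [h' τ hτ]
  · intro t ht
    obtain ⟨y, hy⟩ := hne t ht
    obtain ⟨J, hJ, h⟩ := S.local_bound hp hC hy
    exact ⟨J, mem_nhdsWithin_of_mem_nhds hJ, h⟩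

variable {S}

lemma int_le (hp : 1 < p) {t K A : ℝ} (hK : S.WD t ≤ K) (hA : 0 ≤ A) {g : ℝ → ℝ}
    (h : ∀ x, |g x| ≤ A * S.den t x) : |∫ x, g x| ≤ A * K := by
  have := norm_integral_le_of_norm_le ((S.int_wden hp t).const_mul A) (f := g)
    (Filter.Eventually.of_forall fun x => (h x).trans (by
      have := S.le_wden hp t x
      gcongr))
  rw [integral_const_mul] at this
  exact this.trans (by unfold WD at hK; gcongr)

lemma int_tail (hp : 1 < p) {t K A R : ℝ} (hK : S.WD t ≤ K) (hA : 0 ≤ A) (hR : 0 < R) {g : ℝ → ℝ}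
    (h : ∀ x, |g x| ≤ A * S.den t x) (h0 : ∀ x, |x| ≤ R → g x = 0) : |∫ x, g x| ≤ A * K / R := by
  have := norm_integral_le_of_norm_le ((S.int_wden hp t).const_mul (A / R)) (f := g)
    (Filter.Eventually.of_forall fun x => by
      have hd := S.den_nonneg hp t x
      by_cases hx : |x| ≤ R
      · rw [h0 x hx, norm_zero]; positivity
      · refine (h x).trans ?_
        rw [not_le] at hx
        rw [div_mul_eq_mul_div, le_div_iff₀ hR]
        have : S.den t x * R ≤ (1 + |x|) * S.den t x := by
          rw [mul_comm]; gcongr; linarith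
        nlinarith)
  rw [integral_const_mul] at this
  refine this.trans ?_
  rw [mul_div_right_comm]
  unfold WD at hK; gcongr

lemma flux_le (hp : 1 < p) (t x k1 k2 b : ℝ) (h1 : |k1| ≤ b) (h2 : |k2| ≤ b) :
    |k1 * (3 * S.ux t x ^ 2 + 2 * p * nlF p (S.u t x)) + 2 * k2 * (S.u t x * S.ux t x)|
      ≤ b * (8 + 2 * p) * S.den t x := by
  have hF := nlF_nonneg hp (S.u t x)
  have hb : 0 ≤ b := (abs_nonneg _).trans h1
  have e1 : |k1 * (3 * S.ux t x ^ 2 + 2 * p * nlF p (S.u t x))|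
      ≤ b * (3 * S.ux t x ^ 2 + 2 * p * nlF p (S.u t x)) := by
    rw [abs_mul, abs_of_nonneg (a := 3 * S.ux t x ^ 2 + 2 * p * nlF p (S.u t x)) (by positivity)]
    gcongr
  have e2 : |2 * k2 * (S.u t x * S.ux t x)| ≤ b * (S.u t x ^ 2 + S.ux t x ^ 2) := by
    have : |2 * k2 * (S.u t x * S.ux t x)| = |k2| * (2 * |S.u t x| * |S.ux t x|) := by
      rw [abs_mul, abs_mul, abs_mul, abs_two]; ring
    rw [this]
    gcongr
    have := two_mul_le_add_sq |S.u t x| |S.ux t x|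
    simpa only [sq_abs] using this
  refine (abs_add_le _ _).trans ((add_le_add e1 e2).trans ?_)
  rw [← mul_add, mul_assoc b]
  refine mul_le_mul_of_nonneg_left ?_ hb
  unfold den e
  nlinarith [sq_nonneg (S.u t x), sq_nonneg (S.ux t x), mul_nonneg (by linarith : 0 ≤ p) (sq_nonneg (S.u t x)),
    mul_nonneg (by linarith : 0 ≤ p) (sq_nonneg (S.ux t x))]

lemma mass_id (hp : 1 < p) {a b : ℝ} (hLB : S.LB (Set.uIcc a b)) {ψ ψ1 ψ2 : ℝ → ℝ}
    (d0 : ∀ x, HasDerivAt ψ (ψ1 x) x)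
    (d1 : ∀ x, HasDerivAt ψ1 (ψ2 x) x) (c : Continuous ψ)
    (c1 : Continuous ψ1) (c2 : Continuous ψ2) {L Bψ : ℝ} (hB : ∀ x, |ψ x| ≤ Bψ)
    (s1 : ∀ x, L < |x| → ψ1 x = 0) (s2 : ∀ x, L < |x| → ψ2 x = 0) :
    (∫ x, ψ x * S.u b x ^ 2) - ∫ x, ψ x * S.u a x ^ 2 = -∫ t in a..b, ∫ x, (ψ1 x * (3 * S.ux t x ^ 2
      + 2 * p * nlF p (S.u t x)) + 2 * ψ2 x * (S.u t x * S.ux t x)) := by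
  obtain ⟨K, hK0, hK⟩ := hLB
  obtain ⟨B, hB0, hcut⟩ := exists_cut
  have hBψ : 0 ≤ Bψ := (abs_nonneg _).trans (hB 0)
  rw [← sub_eq_zero]
  refine eq_zero_of_le_div (R0 := max 1 L)
    (Q := Bψ * K + Bψ * K + Bψ * B * (8 + 2 * p) * K * |b - a|) fun R hR => ?_
  have hR1 : 1 ≤ R := (le_max_left _ _).trans hR
  have hRL : L ≤ R := (le_max_right _ _).trans hR
  have hR0 : 0 < R := by linarith
  obtain ⟨χ⟩ := hcut R hR1
  have cc := χ.cont
  have cc1 := χ.cont1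
  have cc2 := χ.cont2
  have key := S.mass_cs hp (z := fun x => ψ x * χ.c x) (z1 := fun x => ψ1 x * χ.c x + ψ x * χ.c1 x)
    (z2 := fun x => ψ2 x * χ.c x + ψ1 x * χ.c1 x + (ψ1 x * χ.c1 x + ψ x * χ.c2 x)) (L := 2 * R)
    (fun x => (d0 x).mul (χ.d0 x))
    (fun x => ((d1 x).mul (χ.d0 x)).add ((d0 x).mul (χ.d1 x))) (by fun_prop) (by fun_prop)
    (by fun_prop) (fun x hx => by simp [χ.out x hx])
    (fun x hx => by simp [χ.out x hx, χ.out1 x hx])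
    (fun x hx => by simp [χ.out x hx, χ.out1 x hx, χ.out2 x hx]) a b
  have hz1 : ∀ x, ψ1 x * χ.c x + ψ x * χ.c1 x = ψ1 x + ψ x * χ.c1 x := by
    intro x
    rcases le_or_gt |x| R with hx | hx
    · rw [χ.one x hx, mul_one]
    · rw [s1 x (hRL.trans_lt hx), zero_mul]
  have hz2 : ∀ x, ψ2 x * χ.c x + ψ1 x * χ.c1 x + (ψ1 x * χ.c1 x + ψ x * χ.c2 x)
      = ψ2 x + ψ x * χ.c2 x := by
    intro x
    rcases le_or_gt |x| R with hx | hx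
    · rw [χ.one x hx, χ.in1 x hx]; ring
    · rw [s1 x (hRL.trans_lt hx), s2 x (hRL.trans_lt hx)]; ring
  simp only [hz1, hz2] at key
  have cu := S.cu
  have cux := S.cux
  have cF := S.cuF hp
  have tail : ∀ t ∈ Set.uIcc a b, |(∫ x, ψ x * S.u t x ^ 2) - ∫ x, ψ x * χ.c x * S.u t x ^ 2|
      ≤ Bψ * K / R := by
    intro t ht
    have i1 : Integrable (fun x => ψ x * S.u t x ^ 2) :=
      (S.int_u2 hp t).bdd_mul c.aestronglyMeasurable (Filter.Eventually.of_forall hB)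
    have i2 : Integrable (fun x => ψ x * χ.c x * S.u t x ^ 2) :=
      integrable_cs (L := 2 * R) ((c.mul cc).mul ((sl cu t).pow 2)) fun x hx => by simp [χ.out x hx]
    rw [← integral_sub i1 i2]
    refine int_tail hp (hK t ht) hBψ hR0 (fun x => ?_) (fun x hx => by simp [χ.one x hx])
    have : ψ x * S.u t x ^ 2 - ψ x * χ.c x * S.u t x ^ 2 = ψ x * ((1 - χ.c x) * S.u t x ^ 2) := by ring
    rw [this, abs_mul, abs_of_nonneg (a := (1 - χ.c x) * S.u t x ^ 2)
      (mul_nonneg (by linarith [χ.le1 x]) (sq_nonneg _))]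
    have := S.e_nonneg hp t x
    refine mul_le_mul (hB x) ?_ (mul_nonneg (by linarith [χ.le1 x]) (sq_nonneg _)) hBψ
    · unfold den; nlinarith [χ.nn x, sq_nonneg (S.u t x)]
  have ii1 : Continuous (fun t => ∫ x, (ψ1 x * (3 * S.ux t x ^ 2
      + 2 * p * nlF p (S.u t x)) + 2 * ψ2 x * (S.u t x * S.ux t x))) :=
    param_cs_continuous (L := L) (by fun_prop) (fun t x hx => by simp [s1 x hx, s2 x hx])
  have ii2 : Continuous (fun t => ∫ x, ((ψ1 x + ψ x * χ.c1 x) * (3 * S.ux t x ^ 2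
      + 2 * p * nlF p (S.u t x)) + 2 * (ψ2 x + ψ x * χ.c2 x) * (S.u t x * S.ux t x))) :=
    param_cs_continuous (L := 2 * R) (by fun_prop) (fun t x hx => by
      simp [s1 x (by linarith), s2 x (by linarith), χ.out1 x hx, χ.out2 x hx])
  have flux : |(∫ t in a..b, ∫ x, (ψ1 x * (3 * S.ux t x ^ 2
      + 2 * p * nlF p (S.u t x)) + 2 * ψ2 x * (S.u t x * S.ux t x)))
      - ∫ t in a..b, ∫ x, ((ψ1 x + ψ x * χ.c1 x) * (3 * S.ux t x ^ 2
      + 2 * p * nlF p (S.u t x)) + 2 * (ψ2 x + ψ x * χ.c2 x) * (S.u t x * S.ux t x))|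
      ≤ Bψ * (B / R) * (8 + 2 * p) * K * |b - a| := by
    rw [← intervalIntegral.integral_sub (ii1.intervalIntegrable _ _) (ii2.intervalIntegrable _ _)]
    rw [← Real.norm_eq_abs]
    refine intervalIntegral.norm_integral_le_of_norm_le_const fun t ht => ?_
    rw [Real.norm_eq_abs, ← integral_sub]
    · refine int_le hp (hK t (Set.uIoc_subset_uIcc ht)) (by positivity) fun x => ?_
      have e1 : (ψ1 x * (3 * S.ux t x ^ 2
        + 2 * p * nlF p (S.u t x)) + 2 * ψ2 x * (S.u t x * S.ux t x)) -
        ((ψ1 x + ψ x * χ.c1 x) * (3 * S.ux t x ^ 2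
        + 2 * p * nlF p (S.u t x)) + 2 * (ψ2 x + ψ x * χ.c2 x) * (S.u t x * S.ux t x))
        = (-(ψ x * χ.c1 x)) * (3 * S.ux t x ^ 2
        + 2 * p * nlF p (S.u t x)) + 2 * (-(ψ x * χ.c2 x)) * (S.u t x * S.ux t x) := by ring
      rw [e1]
      refine flux_le hp t x _ _ _ ?_ ?_
      · rw [abs_neg, abs_mul]
        exact mul_le_mul (hB x) (χ.b1 x) (abs_nonneg _) hBψ
      · rw [abs_neg, abs_mul]
        exact mul_le_mul (hB x) (χ.b2 x) (abs_nonneg _) hBψ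
    · refine integrable_cs (L := L) (sl (g := fun t x => (ψ1 x * (3 * S.ux t x ^ 2
        + 2 * p * nlF p (S.u t x)) + 2 * ψ2 x * (S.u t x * S.ux t x))) (by fun_prop) t)
        (fun x hx => by simp [s1 x hx, s2 x hx])
    · refine integrable_cs (L := 2 * R) (sl (g := fun t x => ((ψ1 x + ψ x * χ.c1 x) * (3 * S.ux t x ^ 2
        + 2 * p * nlF p (S.u t x)) + 2 * (ψ2 x + ψ x * χ.c2 x) * (S.u t x * S.ux t x))) (by fun_prop) t)
        (fun x hx => by simp [s1 x (by linarith), s2 x (by linarith), χ.out1 x hx, χ.out2 x hx])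
  have ta := abs_le.1 (tail a Set.left_mem_uIcc)
  have tb := abs_le.1 (tail b Set.right_mem_uIcc)
  have fl := abs_le.1 flux
  have hQ : (Bψ * K + Bψ * K + Bψ * B * (8 + 2 * p) * K * |b - a|) / R
      = Bψ * K / R + Bψ * K / R + Bψ * (B / R) * (8 + 2 * p) * K * |b - a| := by
    field_simp
  rw [hQ, abs_le]
  constructor <;> linarith

lemma mass_const (hp : 1 < p) {a b : ℝ} (hLB : S.LB (Set.uIcc a b)) : S.Mass a = S.Mass b := by
  have := mass_id hp hLB (ψ := fun _ => 1) (ψ1 := fun _ => 0) (ψ2 := fun _ => 0) (L := 0) (Bψ := 1)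
    (fun x => hasDerivAt_const x _) (fun x => hasDerivAt_const x _) (by fun_prop) (by fun_prop)
    (by fun_prop) (by simp) (by simp) (by simp)
  simp only [one_mul, zero_mul, mul_zero, add_zero, integral_zero, intervalIntegral.integral_zero,
    neg_zero] at this
  unfold Mass; linarith

end Sol


lemma int_add {f g : ℝ → ℝ} (hf : Integrable f) (hg : Integrable g) :
    Integrable (fun x => f x + g x) := hf.add hg

lemma int_sub {f g : ℝ → ℝ} (hf : Integrable f) (hg : Integrable g) :
    Integrable (fun x => f x - g x) := hf.sub hg

lemma int_mul_of_sq {a b : ℝ → ℝ} (ca : Continuous a) (cb : Continuous b)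
    (ia : Integrable (fun x => a x ^ 2)) (ib : Integrable (fun x => b x ^ 2)) :
    Integrable (fun x => a x * b x) := by
  refine (ia.add ib).mono' (ca.mul cb).aestronglyMeasurable (Filter.Eventually.of_forall fun x => ?_)
  rw [Real.norm_eq_abs, abs_le]
  simp only [Pi.add_apply]
  constructor <;> nlinarith [sq_nonneg (a x + b x), sq_nonneg (a x - b x), sq_nonneg (a x),
    sq_nonneg (b x)]

lemma cs_int {a b : ℝ → ℝ} (ca : Continuous a) (cb : Continuous b)
    (ia : Integrable (fun x => a x ^ 2)) (ib : Integrable (fun x => b x ^ 2)) :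
    |∫ x, a x * b x| ≤ √(∫ x, a x ^ 2) * √(∫ x, b x ^ 2) := by
  have iab := int_mul_of_sq ca cb ia ib
  have key : ∀ l : ℝ, 0 ≤ (∫ x, a x ^ 2) * (l * l) + (2 * ∫ x, a x * b x) * l + ∫ x, b x ^ 2 := by
    intro l
    have h0 : 0 ≤ ∫ x, (l * a x + b x) ^ 2 := integral_nonneg fun x => sq_nonneg _
    have h1 : ∀ x, (l * a x + b x) ^ 2 = (l * l) * a x ^ 2 + (2 * l) * (a x * b x) + b x ^ 2 := by
      intro x; ring
    simp only [h1] at h0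
    rw [integral_add (int_add (ia.const_mul _) (iab.const_mul _)) ib,
      integral_add (ia.const_mul _) (iab.const_mul _), integral_const_mul, integral_const_mul] at h0
    linarith
  have hd := discrim_le_zero key
  unfold discrim at hd
  rw [← Real.sqrt_mul (integral_nonneg fun x => sq_nonneg _)]
  apply Real.abs_le_sqrt
  nlinarith

lemma sqrt_int_nonneg (a : ℝ → ℝ) : 0 ≤ √(∫ x, a x ^ 2) := Real.sqrt_nonneg _

namespace Sol
variable {p : ℝ} {S : Sol p}

lemma sq_le_den (hp : 1 < p) (t x : ℝ) : S.u t x ^ 2 + S.ux t x ^ 2 ≤ 2 * S.den t x := by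
  have := nlF_nonneg hp (S.u t x)
  unfold den e
  nlinarith [sq_nonneg (S.u t x)]

lemma sup_le (hp : 1 < p) {t K : ℝ} (hK : S.WD t ≤ K) (x : ℝ) : S.u t x ^ 2 ≤ 2 * K := by
  have cu := sl S.cu t
  have cux := sl S.cux t
  have hd : ∀ y, HasDerivAt (fun y => S.u t y ^ 2) (2 * (S.u t y * S.ux t y)) y := fun y =>
    ((S.dx0 t y).pow 2).congr_deriv (by push_cast; ring)
  have hi : Integrable (fun y => 2 * (S.u t y * S.ux t y)) :=
    (int_mul_of_sq cu cux (S.int_u2 hp t) (S.int_ux2 hp t)).const_mul 2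
  have hlim := tendsto_zero_of_hasDerivAt_of_integrableOn_Iic (a := x) (fun y _ => hd y)
    hi.integrableOn (S.int_u2 hp t).integrableOn
  have h1 := integral_Iic_of_hasDerivAt_of_tendsto' (a := x) (fun y _ => hd y) hi.integrableOn hlim
  rw [sub_zero] at h1
  rw [← h1]
  have hb : ∀ y, 2 * (S.u t y * S.ux t y) ≤ 2 * ((1 + |y|) * S.den t y) := by
    intro y
    have h2 := sq_le_den (S := S) hp t y
    have h3 := S.le_wden hp t y
    nlinarith [sq_nonneg (S.u t y - S.ux t y)]
  have hpos : ∀ y, 0 ≤ 2 * ((1 + |y|) * S.den t y) := fun y => by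
    have := S.den_nonneg hp t y
    positivity
  calc ∫ y in Set.Iic x, 2 * (S.u t y * S.ux t y)
      ≤ ∫ y in Set.Iic x, 2 * ((1 + |y|) * S.den t y) :=
        setIntegral_mono hi.integrableOn ((S.int_wden hp t).const_mul 2).integrableOn hb
    _ ≤ ∫ y, 2 * ((1 + |y|) * S.den t y) :=
        setIntegral_le_integral ((S.int_wden hp t).const_mul 2)
          (Filter.Eventually.of_forall hpos)
    _ ≤ 2 * K := by
      rw [integral_const_mul]
      unfold WD at hK
      linarith

variable (S) in
noncomputable def V (t s : ℝ) : ℝ := √(∫ x, (S.u s x - S.u t x) ^ 2)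

lemma int_v2 (hp : 1 < p) (t s : ℝ) : Integrable (fun x => (S.u s x - S.u t x) ^ 2) := by
  have cus := sl S.cu s
  have cut := sl S.cu t
  refine (((S.int_u2 hp s).const_mul 2).add ((S.int_u2 hp t).const_mul 2)).mono'
    (by fun_prop) (Filter.Eventually.of_forall fun x => ?_)
  rw [Real.norm_eq_abs, abs_of_nonneg (sq_nonneg _)]
  simp only [Pi.add_apply]
  nlinarith [sq_nonneg (S.u s x + S.u t x)]

lemma V_sq (t s : ℝ) : S.V t s ^ 2 = ∫ x, (S.u s x - S.u t x) ^ 2 :=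
  Real.sq_sqrt (integral_nonneg fun x => sq_nonneg _)

lemma p_bound (hp : 1 < p) {K B : ℝ} (hB : 0 < B) {t : ℝ} (hKt : S.WD t ≤ K) (hK0 : 0 < K) :
    ∃ K1 Q, 0 ≤ K1 ∧ 0 ≤ Q ∧ ∀ τ, S.WD τ ≤ K → ∀ R, 1 ≤ R → ∀ χ : Cut B R,
      |∫ x, χ.c x * S.u t x * S.ut τ x| ≤ K1 * S.V t τ + Q / R := by
  obtain ⟨N, hN⟩ := S.dec t
  have hN0 : 0 ≤ N := by
    have h := (abs_nonneg _).trans (hN 0).1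
    simpa using h
  set D : ℝ → ℝ := fun x => (1 + 7 * B) * N / (1 + x ^ 2) with hD
  have cD : Continuous D := by
    refine Continuous.div (by fun_prop) (by fun_prop) fun x => by positivity
  have D0 : ∀ x, 0 ≤ D x := fun x => by positivity
  have iD : Integrable (fun x => D x ^ 2) := by
    refine int_of_dec (K := ((1 + 7 * B) * N) ^ 2) (cD.pow 2) fun x => ?_
    rw [abs_of_nonneg (sq_nonneg _), hD]
    simp only
    rw [div_pow]
    gcongr
    nlinarith [sq_nonneg x]
  set L := p * (√(2 * K)) ^ (p - 1) with hL
  have hL0 : 0 ≤ L := by positivity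
  refine ⟨(1 + L) * √(∫ x, D x ^ 2), 1 / 2 * (B * (8 + 2 * p) * K), by positivity, by positivity,
    fun τ hτ R hR χ => ?_⟩
  have hR0 : 0 < R := by linarith
  have hBR : B / R ≤ B := div_le_self hB.le hR
  have hus : ∀ τ, S.WD τ ≤ K → ∀ x, |S.u τ x| ≤ √(2 * K) := fun τ hτ x =>
    Real.abs_le_sqrt (sup_le hp hτ x)
  have cc := χ.cont
  have cc1 := χ.cont1
  have cc2 := χ.cont2
  have cc3 := χ.cont3
  have cg := sl S.cu t
  have cgx := sl S.cux t
  have cgxx := sl S.cuxx t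
  have cgxxx := sl S.cuxxx t
  have cuτ := sl S.cu τ
  have cfg : Continuous (fun x => nlf p (S.u t x)) := (nlf_continuous hp).comp cg
  have cfτ : Continuous (fun x => nlf p (S.u τ x)) := (nlf_continuous hp).comp cuτ
  set z1 : ℝ → ℝ := fun x => χ.c1 x * S.u t x + χ.c x * S.ux t x with hz1
  set z3 : ℝ → ℝ := fun x => χ.c3 x * S.u t x + 3 * (χ.c2 x * S.ux t x)
    + 3 * (χ.c1 x * S.uxx t x) + χ.c x * S.uxxx t x with hz3
  have key : ∀ τ, ∫ x, χ.c x * S.u t x * S.ut τ x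
      = ∫ x, (z3 x * S.u τ x - z1 x * nlf p (S.u τ x)) := fun τ =>
    S.pde_test hp τ (z := fun x => χ.c x * S.u t x) (z1 := z1)
      (z2 := fun x => χ.c2 x * S.u t x + 2 * (χ.c1 x * S.ux t x) + χ.c x * S.uxx t x)
      (z3 := z3) (L := 2 * R)
      (fun x => (χ.d0 x).mul (S.dx0 t x))
      (fun x => (((χ.d1 x).mul (S.dx0 t x)).add ((χ.d0 x).mul (S.dx1 t x))).congr_deriv (by ring))
      (fun x => ((((χ.d2 x).mul (S.dx0 t x)).add (((χ.d1 x).mul (S.dx1 t x)).const_mul 2)).add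
        ((χ.d0 x).mul (S.dx2 t x))).congr_deriv (by simp only [hz3]; ring))
      (by fun_prop) (by fun_prop) (by fun_prop)
      (fun x hx => by simp [χ.out x hx])
      (fun x hx => by simp [hz1, χ.out x hx, χ.out1 x hx])
      (fun x hx => by simp [χ.out x hx, χ.out1 x hx, χ.out2 x hx])
      (fun x hx => by simp [hz3, χ.out x hx, χ.out1 x hx, χ.out2 x hx, χ.out3 x hx])
  have cz1 : Continuous z1 := by fun_prop
  have cz3 : Continuous z3 := by fun_prop
  have sz1 : ∀ x, 2 * R < |x| → z1 x = 0 := fun x hx => by simp [hz1, χ.out x hx, χ.out1 x hx]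
  have sz3 : ∀ x, 2 * R < |x| → z3 x = 0 := fun x hx => by
    simp [hz3, χ.out x hx, χ.out1 x hx, χ.out2 x hx, χ.out3 x hx]
  have bd : ∀ {k g x : ℝ}, |k| ≤ B / R → |g| ≤ N / (1 + x ^ 2) → |k * g| ≤ B * (N / (1 + x ^ 2)) := by
    intro k g x hk hg
    rw [abs_mul]
    exact mul_le_mul (hk.trans hBR) hg (abs_nonneg _) hB.le
  have bc : ∀ {g x : ℝ}, |g| ≤ N / (1 + x ^ 2) → |χ.c x * g| ≤ N / (1 + x ^ 2) := by
    intro g x hg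
    rw [abs_mul, abs_of_nonneg (χ.nn x)]
    exact (mul_le_of_le_one_left (abs_nonneg _) (χ.le1 x)).trans hg
  have bz1 : ∀ x, |z1 x| ≤ D x := by
    intro x
    obtain ⟨h0, h1, h2, h3⟩ := hN x
    have a1 := abs_le.1 (bd (χ.b1 x) h0)
    have a2 := abs_le.1 (bc h1)
    have hq : 0 ≤ B * (N / (1 + x ^ 2)) := by positivity
    have hDx : D x = N / (1 + x ^ 2) + 7 * (B * (N / (1 + x ^ 2))) := by simp only [hD]; ring
    rw [hDx, abs_le]
    simp only [hz1]
    constructor <;> linarith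
  have bz3 : ∀ x, |z3 x| ≤ D x := by
    intro x
    obtain ⟨h0, h1, h2, h3⟩ := hN x
    have a1 := abs_le.1 (bd (χ.b3 x) h0)
    have a2 := abs_le.1 (bd (χ.b2 x) h1)
    have a3 := abs_le.1 (bd (χ.b1 x) h2)
    have a4 := abs_le.1 (bc h3)
    have hq : 0 ≤ B * (N / (1 + x ^ 2)) := by positivity
    have hDx : D x = N / (1 + x ^ 2) + 7 * (B * (N / (1 + x ^ 2))) := by simp only [hD]; ring
    rw [hDx, abs_le]
    simp only [hz3]
    constructor <;> linarith
  have hdiff : |(∫ x, χ.c x * S.u t x * S.ut τ x) - ∫ x, χ.c x * S.u t x * S.ut t x|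
      ≤ (1 + L) * √(∫ x, D x ^ 2) * S.V t τ := by
    rw [key τ, key t, ← integral_sub
      (integrable_cs (L := 2 * R) (by fun_prop) fun x hx => by simp [sz1 x hx, sz3 x hx])
      (integrable_cs (L := 2 * R) (by fun_prop) fun x hx => by simp [sz1 x hx, sz3 x hx])]
    have cv : Continuous (fun x => |S.u τ x - S.u t x|) := by fun_prop
    have iv : Integrable (fun x => |S.u τ x - S.u t x| ^ 2) := by
      simpa only [sq_abs] using int_v2 hp t τ
    have hb := norm_integral_le_of_norm_le ((int_mul_of_sq cD cv iD iv).const_mul (1 + L))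
      (f := fun x => z3 x * S.u τ x - z1 x * nlf p (S.u τ x)
        - (z3 x * S.u t x - z1 x * nlf p (S.u t x)))
      (Filter.Eventually.of_forall fun x => by
        have e1 : z3 x * S.u τ x - z1 x * nlf p (S.u τ x)
          - (z3 x * S.u t x - z1 x * nlf p (S.u t x)) = z3 x * (S.u τ x - S.u t x)
            - z1 x * (nlf p (S.u τ x) - nlf p (S.u t x)) := by ring
        rw [e1, Real.norm_eq_abs]
        refine (abs_sub _ _).trans ?_
        rw [abs_mul, abs_mul]
        have l1 := nlf_lip hp _ _ _ (hus τ hτ x) (hus t hKt x)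
        have m1 := mul_le_mul_of_nonneg_right (bz3 x) (abs_nonneg (S.u τ x - S.u t x))
        have m2 := mul_le_mul (bz1 x) l1 (abs_nonneg _) (D0 x)
        rw [← hL] at m2
        calc _ ≤ _ := add_le_add m1 m2
          _ = _ := by ring)
    rw [integral_const_mul, Real.norm_eq_abs] at hb
    have hcs := (le_abs_self _).trans (cs_int cD cv iD iv)
    simp only [sq_abs] at hcs
    refine hb.trans ?_
    rw [mul_assoc]
    unfold V
    gcongr
  have h0 : |∫ x, χ.c x * S.u t x * S.ut t x| ≤ 1 / 2 * (B * (8 + 2 * p) * K) / R := by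
    have e1 : ∫ x, χ.c x * S.u t x * S.ut t x
        = 1 / 2 * ∫ x, χ.c x * (2 * S.u t x * S.ut t x) := by
      rw [← integral_const_mul]
      congr 1; ext x; ring
    rw [e1, S.mass_flux hp t χ.d0 χ.d1 cc cc1 cc2 χ.out χ.out1 χ.out2, abs_mul,
      abs_of_pos (by norm_num : (0:ℝ) < 1 / 2)]
    have := int_le hp hKt (A := B / R * (8 + 2 * p)) (by positivity) (g := fun x => -(χ.c1 x *
      (3 * S.ux t x ^ 2 + 2 * p * nlF p (S.u t x)) + 2 * χ.c2 x * (S.u t x * S.ux t x)))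
      (fun x => by rw [abs_neg]; exact flux_le hp t x _ _ _ (χ.b1 x) (χ.b2 x))
    calc _ ≤ 1 / 2 * (B / R * (8 + 2 * p) * K) := by gcongr
      _ = _ := by ring
  have := abs_le.1 hdiff
  have := abs_le.1 h0
  rw [abs_le]
  constructor <;> linarith

lemma V_step (hp : 1 < p) {α β : ℝ} (hLB : S.LB (Set.Icc α β)) {t : ℝ} (ht : t ∈ Set.Icc α β) :
    ∃ K1, 0 ≤ K1 ∧ ∀ s ∈ Set.Icc α β, ∀ m, (∀ τ ∈ Set.uIcc t s, S.V t τ ≤ m) →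
      S.V t s ^ 2 ≤ 2 * |s - t| * K1 * m := by
  have hLB' := hLB
  obtain ⟨K, hK0, hK⟩ := hLB
  obtain ⟨B, hB0, hcut⟩ := exists_cut
  obtain ⟨K1, Q, hK1, hQ, hpb⟩ := p_bound hp hB0 (hK t ht) hK0
  refine ⟨K1, hK1, fun s hs m hm => ?_⟩
  have hsub : Set.uIcc t s ⊆ Set.Icc α β := Set.uIcc_subset_Icc ht hs
  have cg := sl S.cu t
  have cs := sl S.cu s
  have hmass : S.Mass t = S.Mass s := mass_const hp (by
    obtain ⟨K, hK0, hK⟩ := hLB'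
    exact ⟨K, hK0, fun τ hτ => hK τ (hsub hτ)⟩)
  have iP : ∀ τ, Integrable (fun x => S.u t x * S.u τ x) := fun τ =>
    int_mul_of_sq cg (sl S.cu τ) (S.int_u2 hp t) (S.int_u2 hp τ)
  have hV : S.V t s ^ 2 = 2 * ((∫ x, S.u t x * S.u t x) - ∫ x, S.u t x * S.u s x) := by
    rw [V_sq]
    have e1 : ∀ x, (S.u s x - S.u t x) ^ 2 = S.u s x ^ 2 + S.u t x ^ 2 - 2 * (S.u t x * S.u s x) := by
      intro x; ring
    simp only [e1]
    rw [integral_sub (int_add (S.int_u2 hp s) (S.int_u2 hp t)) ((iP s).const_mul 2),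
      integral_add (S.int_u2 hp s) (S.int_u2 hp t), integral_const_mul]
    unfold Mass at hmass
    have e2 : ∫ x, S.u t x * S.u t x = ∫ x, S.u t x ^ 2 := by congr 1; ext x; ring
    rw [e2, ← hmass]; ring
  have hlim : ∀ R, 1 ≤ R → S.V t s ^ 2 ≤ 2 * |s - t| * K1 * m + (2 * |s - t| * Q + 8 * K) / R := by
    intro R hR
    have hR0 : 0 < R := by linarith
    obtain ⟨χ⟩ := hcut R hR
    have cc := χ.cont
    have cu := S.cu
    have cut := S.cut
    have hcgq : Continuous (fun q : ℝ × ℝ => S.u t q.2) := cg.comp continuous_snd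
    have ftc := param_cs_ftc (Θ := fun τ x => χ.c x * S.u t x * S.u τ x)
      (Θt := fun τ x => χ.c x * S.u t x * S.ut τ x) (L := 2 * R)
      (by fun_prop) (by fun_prop) (fun τ x => (S.dt0 τ x).const_mul _)
      (fun τ x hx => by simp [χ.out x hx]) (fun τ x hx => by simp [χ.out x hx]) t s
    have hint : |∫ τ in t..s, ∫ x, χ.c x * S.u t x * S.ut τ x| ≤ (K1 * m + Q / R) * |s - t| := by
      rw [← Real.norm_eq_abs]
      refine intervalIntegral.norm_integral_le_of_norm_le_const fun τ hτ => ?_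
      have hτ' := Set.uIoc_subset_uIcc hτ
      refine (hpb τ (hK τ (hsub hτ')) R hR χ).trans ?_
      have := hm τ hτ'
      gcongr
    rw [← ftc] at hint
    have tail : ∀ τ ∈ Set.uIcc t s, |(∫ x, S.u t x * S.u τ x) - ∫ x, χ.c x * S.u t x * S.u τ x|
        ≤ 2 * K / R := by
      intro τ hτ
      have cτ := sl S.cu τ
      have iu : ∀ τ, Integrable (fun x => (1 - χ.c x) * S.u τ x ^ 2) := fun τ =>
        (S.int_u2 hp τ).bdd_mul (c := 1) (by fun_prop) (Filter.Eventually.of_forall fun x => by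
          rw [Real.norm_eq_abs, abs_le]
          constructor <;> linarith [χ.nn x, χ.le1 x])
      have tl : ∀ τ, S.WD τ ≤ K → ∫ x, (1 - χ.c x) * S.u τ x ^ 2 ≤ K / R := by
        intro τ hτ
        have := (le_abs_self _).trans (int_tail hp hτ zero_le_one hR0
          (g := fun x => (1 - χ.c x) * S.u τ x ^ 2) (fun x => by
            rw [abs_of_nonneg (mul_nonneg (by linarith [χ.le1 x]) (sq_nonneg _)), one_mul]
            have := S.e_nonneg hp τ x
            unfold den; nlinarith [χ.nn x, sq_nonneg (S.u τ x)])
          (fun x hx => by simp [χ.one x hx]))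
        rwa [one_mul] at this
      rw [← integral_sub (iP τ) (integrable_cs (L := 2 * R) (by fun_prop)
        fun x hx => by simp [χ.out x hx])]
      have hb := norm_integral_le_of_norm_le ((iu t).add (iu τ))
        (f := fun x => S.u t x * S.u τ x - χ.c x * S.u t x * S.u τ x)
        (Filter.Eventually.of_forall fun x => by
          have e1 : S.u t x * S.u τ x - χ.c x * S.u t x * S.u τ x
            = (1 - χ.c x) * (S.u t x * S.u τ x) := by ring
          have h1 : 0 ≤ 1 - χ.c x := by linarith [χ.le1 x]
          rw [e1, Real.norm_eq_abs, abs_mul, abs_of_nonneg h1]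
          simp only [Pi.add_apply]
          rw [← mul_add]
          refine mul_le_mul_of_nonneg_left ?_ h1
          rw [abs_le]
          constructor <;> nlinarith [sq_nonneg (S.u t x + S.u τ x), sq_nonneg (S.u t x - S.u τ x),
            sq_nonneg (S.u t x), sq_nonneg (S.u τ x)])
      rw [integral_add' (iu t) (iu τ)] at hb
      have q1 := tl t (hK t ht)
      have q2 := tl τ (hK τ (hsub hτ))
      refine hb.trans ?_
      calc _ ≤ K / R + K / R := add_le_add q1 q2
        _ = _ := by ring
    have t1 := abs_le.1 (tail t Set.left_mem_uIcc)
    have t2 := abs_le.1 (tail s Set.right_mem_uIcc)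
    have t3 := abs_le.1 hint
    have e3 : 2 * |s - t| * K1 * m + (2 * |s - t| * Q + 8 * K) / R
      = 2 * ((K1 * m + Q / R) * |s - t|) + 4 * (2 * K / R) := by ring
    rw [hV, e3]
    linarith
  have h1 : Filter.Tendsto (fun R : ℝ => 2 * |s - t| * K1 * m + (2 * |s - t| * Q + 8 * K) / R)
      Filter.atTop (nhds (2 * |s - t| * K1 * m + 0)) :=
    tendsto_const_nhds.add (tendsto_const_nhds.div_atTop Filter.tendsto_id)
  rw [add_zero] at h1
  exact ge_of_tendsto h1 ((Filter.eventually_ge_atTop 1).mono hlim)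

lemma V_lip (hp : 1 < p) {α β : ℝ} (hLB : S.LB (Set.Icc α β)) {t : ℝ} (ht : t ∈ Set.Icc α β) :
    ∃ Kt, 0 ≤ Kt ∧ ∀ s ∈ Set.Icc α β, S.V t s ≤ Kt * |s - t| := by
  obtain ⟨K1, hK1, h⟩ := V_step hp hLB ht
  obtain ⟨K, hK0, hK⟩ := hLB
  refine ⟨2 * K1, by positivity, fun s hs => ?_⟩
  have hsub : Set.uIcc t s ⊆ Set.Icc α β := Set.uIcc_subset_Icc ht hs
  have V0 : ∀ τ, 0 ≤ S.V t τ := fun τ => Real.sqrt_nonneg _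
  have hmb : ∀ τ ∈ Set.Icc α β, S.Mass τ ≤ K := by
    intro τ hτ
    have := int_le hp (hK τ hτ) zero_le_one (g := fun x => S.u τ x ^ 2) (fun x => by
      rw [abs_of_nonneg (sq_nonneg _), one_mul]
      have := S.e_nonneg hp τ x
      unfold den; linarith)
    rw [one_mul] at this
    exact (le_abs_self _).trans this
  have hbdd : BddAbove (S.V t '' Set.uIcc t s) := by
    refine ⟨√(4 * K), ?_⟩
    rintro _ ⟨τ, hτ, rfl⟩
    refine Real.sqrt_le_sqrt ?_
    have hi : ∫ x, (S.u τ x - S.u t x) ^ 2 ≤ ∫ x, (2 * S.u τ x ^ 2 + 2 * S.u t x ^ 2) :=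
      integral_mono (int_v2 hp t τ) (((S.int_u2 hp τ).const_mul 2).add ((S.int_u2 hp t).const_mul 2))
        fun x => by
          simp only
          nlinarith [sq_nonneg (S.u τ x + S.u t x)]
    rw [integral_add ((S.int_u2 hp τ).const_mul 2) ((S.int_u2 hp t).const_mul 2),
      integral_const_mul, integral_const_mul] at hi
    have h1 := hmb τ (hsub hτ)
    have h2 := hmb t ht
    unfold Mass at h1 h2
    linarith
  set m := sSup (S.V t '' Set.uIcc t s) with hm
  have hle : ∀ τ ∈ Set.uIcc t s, S.V t τ ≤ m := fun τ hτ => le_csSup hbdd ⟨τ, hτ, rfl⟩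
  have hm0 : 0 ≤ m := (V0 t).trans (hle t Set.left_mem_uIcc)
  have h2 : ∀ τ ∈ Set.uIcc t s, S.V t τ ≤ √(2 * |s - t| * K1 * m) := by
    intro τ hτ
    refine Real.le_sqrt_of_sq_le ?_
    refine (h τ (hsub hτ) m fun σ hσ => hle σ (Set.uIcc_subset_uIcc_left hτ hσ)).trans ?_
    have : |τ - t| ≤ |s - t| := Set.abs_sub_left_of_mem_uIcc hτ
    gcongr
  have h3 : m ≤ √(2 * |s - t| * K1 * m) := by
    refine csSup_le ⟨_, t, Set.left_mem_uIcc, rfl⟩ ?_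
    rintro _ ⟨τ, hτ, rfl⟩
    exact h2 τ hτ
  have h4 : m ^ 2 ≤ 2 * |s - t| * K1 * m := by
    rw [← Real.sq_sqrt (by positivity : 0 ≤ 2 * |s - t| * K1 * m)]
    gcongr
  have h5 : m ≤ 2 * |s - t| * K1 := by
    rcases hm0.eq_or_lt with h0 | h0
    · rw [← h0]; positivity
    · nlinarith
  have := hle s Set.right_mem_uIcc
  linarith

end Sol


namespace Sol
variable {p : ℝ} {S : Sol p}

variable (S) in
def decN (N t : ℝ) : Prop := ∀ x, |S.u t x| ≤ N / (1 + x ^ 2) ∧ |S.ux t x| ≤ N / (1 + x ^ 2) ∧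
    |S.uxx t x| ≤ N / (1 + x ^ 2) ∧ |S.uxxx t x| ≤ N / (1 + x ^ 2)

lemma decN_nonneg {N t : ℝ} (h : S.decN N t) : 0 ≤ N := by
  have h := (abs_nonneg _).trans (h 0).1
  simpa using h

lemma decN_le {N t : ℝ} (h : S.decN N t) (x : ℝ) : N / (1 + x ^ 2) ≤ N :=
  div_le_self (decN_nonneg h) (by nlinarith [sq_nonneg x])

lemma J_dec (hp : 1 < p) (t : ℝ) : ∃ Kj, 0 ≤ Kj ∧ ∀ x, |S.J t x| ≤ Kj * (1 + x ^ 2)⁻¹ := by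
  obtain ⟨N, hN⟩ := S.dec t
  have hN0 := decN_nonneg (S := S) hN
  have hNle := decN_le (S := S) hN
  have hq : 0 ≤ N ^ (p - 1) := by positivity
  refine ⟨N * (N + p * N ^ (p - 1) * N) + 1 / 2 * ((N + N ^ (p - 1) * N) * (N + N ^ (p - 1) * N)),
    by positivity, fun x => ?_⟩
  obtain ⟨h0, h1, h2, h3⟩ := hN x
  set d := (1 + x ^ 2)⁻¹ with hd
  have hd0 : 0 < d := by positivity
  have hd1 : d ≤ 1 := inv_le_one_of_one_le₀ (by nlinarith [sq_nonneg x])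
  rw [div_eq_mul_inv, ← hd] at h0 h1 h2 h3
  have hNd : N * d ≤ N := mul_le_of_le_one_right hN0 hd1
  have hp0 : |S.u t x| ^ (p - 1) ≤ N ^ (p - 1) :=
    Real.rpow_le_rpow (abs_nonneg _) (h0.trans hNd) (by linarith)
  have hut : |S.ut t x| ≤ (N + p * N ^ (p - 1) * N) * d := by
    rw [S.pde]
    refine (abs_add_le _ _).trans ?_
    rw [abs_neg, abs_mul, abs_mul, abs_of_nonneg (by linarith : 0 ≤ p),
      abs_of_nonneg (by positivity : 0 ≤ |S.u t x| ^ (p - 1))]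
    have : p * |S.u t x| ^ (p - 1) * |S.ux t x| ≤ p * N ^ (p - 1) * (N * d) := by gcongr
    linarith
  have hf := nlf_abs_le hp N _ (h0.trans hNd)
  have hw : |S.w t x| ≤ (N + N ^ (p - 1) * N) * d := by
    unfold w
    refine (abs_add_le _ _).trans ?_
    rw [abs_neg]
    have : N ^ (p - 1) * |S.u t x| ≤ N ^ (p - 1) * (N * d) := by gcongr
    linarith
  have hw' : |S.w t x| ≤ N + N ^ (p - 1) * N := by
    refine hw.trans (mul_le_of_le_one_right (by positivity) hd1)
  unfold J
  refine (abs_add_le _ _).trans ?_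
  rw [abs_mul, abs_mul, abs_of_pos (by norm_num : (0:ℝ) < 1 / 2), abs_of_nonneg (sq_nonneg (S.w t x)),
    ← sq_abs (S.w t x), sq]
  have a1 : |S.ux t x| * |S.ut t x| ≤ N * ((N + p * N ^ (p - 1) * N) * d) :=
    mul_le_mul (h1.trans hNd) hut (abs_nonneg _) hN0
  have a2 : |S.w t x| * |S.w t x| ≤ (N + N ^ (p - 1) * N) * ((N + N ^ (p - 1) * N) * d) :=
    mul_le_mul hw' hw (abs_nonneg _) (by positivity)
  linarith

lemma tail_diff (hp : 1 < p) {N Bψ B R : ℝ} (hB : 0 < B) (hR : 1 ≤ R) (χ : Cut B R) {ψ ψ1 : ℝ → ℝ}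
    (d0 : ∀ x, HasDerivAt ψ (ψ1 x) x) (c : Continuous ψ) (c1 : Continuous ψ1)
    (hBψ : ∀ x, |ψ x| ≤ Bψ) (s1 : ∀ x, R < |x| → ψ1 x = 0) {s t : ℝ} (hs : S.decN N s)
    (ht : S.decN N t) :
    |∫ x, (1 - χ.c x) * ψ x * (S.e s x - S.e t x)| ≤
      (Bψ * (B + 1) * N + Bψ * N ^ (p - 1) * (2 * N)) * √π / R * S.V t s := by
  have hR0 : 0 < R := by linarith
  have hBψ0 : 0 ≤ Bψ := (abs_nonneg _).trans (hBψ 0)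
  have hN0 := decN_nonneg hs
  have hBR : B / R ≤ B := div_le_self hB.le hR
  set C' := Bψ * (B + 1) * N + Bψ * N ^ (p - 1) * (2 * N) with hC'
  have hC0 : 0 ≤ C' := by positivity
  have cc := χ.cont
  have cc1 := χ.cont1
  have cus := sl S.cu s
  have cut := sl S.cu t
  have cuxs := sl S.cux s
  have cuxt := sl S.cux t
  have cuxxs := sl S.cuxx s
  have cuxxt := sl S.cuxx t
  have ces := sl (S.ce hp) s
  have cet := sl (S.ce hp) t
  have cFs : Continuous (fun x => nlF p (S.u s x)) := (nlF_continuous hp).comp cus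
  have cFt : Continuous (fun x => nlF p (S.u t x)) := (nlF_continuous hp).comp cut
  set θ : ℝ → ℝ := fun x => (1 - χ.c x) * ψ x with hθ
  set θ1 : ℝ → ℝ := fun x => -(χ.c1 x * ψ x) with hθ1
  have cθ : Continuous θ := by fun_prop
  have cθ1 : Continuous θ1 := by fun_prop
  have dθ : ∀ x, HasDerivAt θ (θ1 x) x := by
    intro x
    refine (((χ.d0 x).const_sub 1).mul (d0 x)).congr_deriv ?_
    have : (1 - χ.c x) * ψ1 x = 0 := by
      rcases le_or_gt |x| R with hx | hx
      · rw [χ.one x hx]; ring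
      · rw [s1 x hx]; ring
    simp only [hθ1]
    linarith
  have bθ : ∀ x, |θ x| ≤ Bψ := by
    intro x
    simp only [hθ]
    rw [abs_mul, abs_of_nonneg (by linarith [χ.le1 x])]
    exact (mul_le_of_le_one_left (abs_nonneg _) (by linarith [χ.nn x])).trans (hBψ x)
  have bθ1 : ∀ x, |θ1 x| ≤ B * Bψ := by
    intro x
    simp only [hθ1]
    rw [abs_neg, abs_mul]
    exact mul_le_mul ((χ.b1 x).trans hBR) (hBψ x) (abs_nonneg _) hB.le
  have zθ : ∀ x, |x| ≤ R → θ x = 0 := fun x hx => by simp [hθ, χ.one x hx]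
  have zθ1 : ∀ x, |x| ≤ R → θ1 x = 0 := fun x hx => by simp [hθ1, χ.in1 x hx]
  set v : ℝ → ℝ := fun x => S.u s x - S.u t x with hv
  have cv : Continuous v := by fun_prop
  set wx : ℝ → ℝ := fun x => S.ux s x + S.ux t x with hwx
  set wxx : ℝ → ℝ := fun x => S.uxx s x + S.uxx t x with hwxx
  have cwx : Continuous wx := by fun_prop
  have cwxx : Continuous wxx := by fun_prop
  set rhs : ℝ → ℝ := fun x => θ x * (nlF p (S.u s x) - nlF p (S.u t x))
    - 1 / 2 * (v x * (θ1 x * wx x + θ x * wxx x)) with hrhs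
  have crhs : Continuous rhs := by fun_prop
  set D : ℝ → ℝ := fun x => C' / R * (√(1 + x ^ 2))⁻¹ with hD
  have cD : Continuous D := by
    refine continuous_const.mul (Continuous.inv₀ (by fun_prop) fun x => ?_)
    have : 0 < 1 + x ^ 2 := by positivity
    exact (Real.sqrt_pos.2 this).ne'
  have D2 : ∀ x, D x ^ 2 = (C' / R) ^ 2 * (1 + x ^ 2)⁻¹ := by
    intro x
    simp only [hD]
    rw [mul_pow, inv_pow, Real.sq_sqrt (by positivity)]
  have iD : Integrable (fun x => D x ^ 2) := by
    simp only [D2]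
    exact integrable_inv_one_add_sq.const_mul _
  have D0 : ∀ x, 0 ≤ D x := fun x => by positivity
  have hDint : √(∫ x, D x ^ 2) = C' / R * √π := by
    simp only [D2]
    rw [integral_const_mul, integral_univ_inv_one_add_sq, Real.sqrt_mul (by positivity),
      Real.sqrt_sq (by positivity)]
  have hDbig : ∀ x, R < |x| → C' / (1 + x ^ 2) ≤ D x := by
    intro x hx
    have hpos : (0:ℝ) < 1 + x ^ 2 := by positivity
    have h1 : R ≤ √(1 + x ^ 2) := by
      refine Real.le_sqrt_of_sq_le ?_
      have := sq_abs x
      nlinarith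
    simp only [hD]
    rw [div_mul_eq_mul_div, ← div_eq_mul_inv, div_div]
    refine div_le_div_of_nonneg_left hC0 (mul_pos (Real.sqrt_pos.2 hpos) hR0) ?_
    calc √(1 + x ^ 2) * R ≤ √(1 + x ^ 2) * √(1 + x ^ 2) := by gcongr
      _ = 1 + x ^ 2 := Real.mul_self_sqrt hpos.le
  have brhs : ∀ x, |rhs x| ≤ D x * |v x| := by
    intro x
    rcases le_or_gt |x| R with hx | hx
    · have : rhs x = 0 := by simp [hrhs, zθ x hx, zθ1 x hx]
      rw [this, abs_zero]
      exact mul_nonneg (D0 x) (abs_nonneg _)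
    · refine le_trans ?_ (mul_le_mul_of_nonneg_right (hDbig x hx) (abs_nonneg _))
      obtain ⟨a0, a1, a2, -⟩ := hs x
      obtain ⟨b0, b1, b2, -⟩ := ht x
      set d := N / (1 + x ^ 2) with hd
      have hd0 : 0 ≤ d := by positivity
      have w1 : |wx x| ≤ 2 * d := (abs_add_le _ _).trans (by linarith)
      have w2 : |wxx x| ≤ 2 * d := (abs_add_le _ _).trans (by linarith)
      have hF := nlF_lip hp N _ _ (a0.trans (decN_le hs x)) (b0.trans (decN_le hs x))
      have f1 : |θ x * (nlF p (S.u s x) - nlF p (S.u t x))| ≤ Bψ * (N ^ (p - 1) * (2 * d) * |v x|) := by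
        rw [abs_mul]
        refine mul_le_mul (bθ x) (hF.trans ?_) (abs_nonneg _) hBψ0
        have : |S.u s x| + |S.u t x| ≤ 2 * d := by linarith
        gcongr
      have f2 : |θ1 x * wx x + θ x * wxx x| ≤ B * Bψ * (2 * d) + Bψ * (2 * d) := by
        refine (abs_add_le _ _).trans ?_
        rw [abs_mul, abs_mul]
        exact add_le_add (mul_le_mul (bθ1 x) w1 (abs_nonneg _) (by positivity))
          (mul_le_mul (bθ x) w2 (abs_nonneg _) hBψ0)
      have f3 : |1 / 2 * (v x * (θ1 x * wx x + θ x * wxx x))|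
          ≤ 1 / 2 * (|v x| * (B * Bψ * (2 * d) + Bψ * (2 * d))) := by
        rw [abs_mul, abs_mul, abs_of_pos (by norm_num : (0:ℝ) < 1 / 2)]
        gcongr
      refine (abs_sub _ _).trans ((add_le_add f1 f3).trans (le_of_eq ?_))
      rw [hC', hd]
      ring
  have iv : Integrable (fun x => |v x| ^ 2) := by
    simpa only [sq_abs] using int_v2 hp t s
  have iDv := int_mul_of_sq cD cv.abs iD iv
  have irhs : Integrable rhs := iDv.mono' crhs.aestronglyMeasurable (Filter.Eventually.of_forall brhs)
  have ie : Integrable (fun x => θ x * (S.e s x - S.e t x)) :=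
    (int_sub (S.int_e hp s) (S.int_e hp t)).bdd_mul cθ.aestronglyMeasurable
      (Filter.Eventually.of_forall bθ)
  have hG : ∀ x, HasDerivAt (fun x => 1 / 2 * (θ x * (v x * wx x)))
      (θ x * (S.e s x - S.e t x) - rhs x) x := by
    intro x
    refine (((dθ x).mul ((((S.dx0 s x).sub (S.dx0 t x))).mul
      ((S.dx1 s x).add (S.dx1 t x)))).const_mul (1 / 2)).congr_deriv ?_
    simp only [hrhs, hwx, hwxx, hv, e, Pi.mul_apply, Pi.sub_apply, Pi.add_apply]
    ring
  have iG : Integrable (fun x => 1 / 2 * (θ x * (v x * wx x))) := by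
    refine int_of_dec (K := 1 / 2 * (Bψ * (2 * N * (2 * N)))) (by fun_prop) fun x => ?_
    obtain ⟨a0, a1, a2, -⟩ := hs x
    obtain ⟨b0, b1, b2, -⟩ := ht x
    have hle := decN_le hs x
    have v1 : |v x| ≤ 2 * N := (abs_sub _ _).trans (by linarith)
    have w1 : |wx x| ≤ 2 * (N / (1 + x ^ 2)) := (abs_add_le _ _).trans (by linarith)
    rw [abs_mul, abs_mul (θ x), abs_mul (v x), abs_of_pos (by norm_num : (0:ℝ) < 1 / 2)]
    calc 1 / 2 * (|θ x| * (|v x| * |wx x|)) ≤ 1 / 2 * (Bψ * (2 * N * (2 * (N / (1 + x ^ 2))))) := by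
          have := bθ x
          gcongr
      _ = _ := by ring
  have h0 := integral_eq_zero_of_hasDerivAt_of_integrable hG (int_sub ie irhs) iG
  rw [integral_sub ie irhs, sub_eq_zero] at h0
  rw [h0]
  have hb := norm_integral_le_of_norm_le iDv (f := rhs) (Filter.Eventually.of_forall brhs)
  have hcs := (le_abs_self _).trans (cs_int cD cv.abs iD iv)
  simp only [sq_abs] at hcs
  refine hb.trans (hcs.trans (le_of_eq ?_))
  rw [hDint]
  unfold V
  ring

end Sol


lemma const_of_null {h : ℝ → ℝ} {a b : ℝ} (hc : ContinuousOn h (Set.uIcc a b)) (F : ℕ → Set ℝ)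
    (hF : Set.uIcc a b ⊆ ⋃ n, F n) (hd : ∀ n, ∀ t ∈ F n, HasDerivWithinAt h 0 (F n) t) :
    h a = h b := by
  by_contra hne
  have h1 : ∀ n, volume (h '' F n) = 0 := by
    intro n
    refine addHaar_image_eq_zero_of_det_fderivWithin_eq_zero volume 
      (f' := fun _ => ContinuousLinearMap.toSpanSingleton ℝ (0 : ℝ))
      (fun t ht => ?_) (fun t ht => ?_)
    · exact (hd n t ht).hasFDerivWithinAt
    · simp [ContinuousLinearMap.det]
  have h2 : volume (h '' Set.uIcc a b) = 0 := by
    refine measure_mono_null ((Set.image_mono hF).trans (Set.image_iUnion).subset) ?_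
    exact measure_iUnion_null h1
  have h3 := measure_mono_null (intermediate_value_uIcc hc) h2
  rw [Real.volume_interval, ENNReal.ofReal_eq_zero] at h3
  exact hne (sub_eq_zero.1 (abs_eq_zero.1 (le_antisymm h3 (abs_nonneg _)))).symm

namespace Sol
variable {p : ℝ} {S : Sol p}

lemma energy_id (hp : 1 < p) {α β : ℝ} (hαβ : α ≤ β) (hLB : S.LB (Set.Icc α β)) {ψ ψ1 : ℝ → ℝ}
    (d0 : ∀ x, HasDerivAt ψ (ψ1 x) x) (c : Continuous ψ) (c1 : Continuous ψ1) {L Bψ : ℝ}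
    (hB : ∀ x, |ψ x| ≤ Bψ) (s1 : ∀ x, L < |x| → ψ1 x = 0) :
    (∫ x, ψ x * S.e β x) - ∫ x, ψ x * S.e α x = -∫ t in α..β, ∫ x, ψ1 x * S.J t x := by
  have hLB' := hLB
  obtain ⟨K, hK0, hK⟩ := hLB
  obtain ⟨B, hB0, hcut⟩ := exists_cut
  have hBψ : 0 ≤ Bψ := (abs_nonneg _).trans (hB 0)
  have cJ := S.cJ hp
  have ce := S.ce hp
  have ii1 : Continuous (fun t => ∫ x, ψ1 x * S.J t x) :=
    param_cs_continuous (L := L) (by fun_prop) (fun t x hx => by simp [s1 x hx])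
  set h : ℝ → ℝ := fun τ => (∫ x, ψ x * S.e τ x) + ∫ t in α..τ, ∫ x, ψ1 x * S.J t x with hh
  have iψ : ∀ τ, Integrable (fun x => ψ x * S.e τ x) := fun τ =>
    (S.int_e hp τ).bdd_mul c.aestronglyMeasurable (Filter.Eventually.of_forall hB)
  have itl : ∀ {R : ℝ} (χ : Cut B R) τ, Integrable (fun x => (1 - χ.c x) * ψ x * S.e τ x) := by
    intro R χ τ
    have cc := χ.cont
    refine (S.int_e hp τ).bdd_mul (c := Bψ) (by fun_prop) (Filter.Eventually.of_forall fun x => ?_)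
    rw [Real.norm_eq_abs, abs_mul, abs_of_nonneg (by linarith [χ.le1 x])]
    exact (mul_le_of_le_one_left (abs_nonneg _) (by linarith [χ.nn x])).trans (hB x)
  have ics : ∀ {R : ℝ} (χ : Cut B R) τ, Integrable (fun x => ψ x * χ.c x * S.e τ x) := by
    intro R χ τ
    have cc := χ.cont
    have ceτ := sl ce τ
    exact integrable_cs (L := 2 * R) (by fun_prop) fun x hx => by simp [χ.out x hx]
  have split : ∀ {R : ℝ} (χ : Cut B R) τ, ∫ x, ψ x * S.e τ x
      = (∫ x, ψ x * χ.c x * S.e τ x) + ∫ x, (1 - χ.c x) * ψ x * S.e τ x := by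
    intro R χ τ
    rw [← integral_add (ics χ τ) (itl χ τ)]
    congr 1; ext x; ring
  have tail : ∀ {R : ℝ} (χ : Cut B R) (hR : 1 ≤ R), ∀ τ ∈ Set.Icc α β,
      |∫ x, (1 - χ.c x) * ψ x * S.e τ x| ≤ Bψ * K / R := by
    intro R χ hR τ hτ
    refine int_tail hp (hK τ hτ) hBψ (by linarith) (fun x => ?_) (fun x hx => by simp [χ.one x hx])
    have he := S.e_nonneg hp τ x
    have : S.e τ x ≤ S.den τ x := by unfold den; nlinarith [sq_nonneg (S.u τ x)]
    rw [abs_mul, abs_of_nonneg he]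
    refine mul_le_mul ?_ this he hBψ
    rw [abs_mul, abs_of_nonneg (by linarith [χ.le1 x])]
    exact (mul_le_of_le_one_left (abs_nonneg _) (by linarith [χ.nn x])).trans (hB x)
  -- continuity
  have hcont : ContinuousOn h (Set.Icc α β) := by
    refine continuousOn_of_uniform_approx_of_continuousOn fun U hU => ?_
    obtain ⟨ε, hε, hεU⟩ := Metric.mem_uniformity_dist.1 hU
    set R := max 1 (Bψ * K / ε + 1) with hR
    have hR1 : 1 ≤ R := le_max_left _ _
    have hR0 : 0 < R := by linarith
    obtain ⟨χ⟩ := hcut R hR1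
    have cc := χ.cont
    refine ⟨fun τ => (∫ x, ψ x * χ.c x * S.e τ x) + ∫ t in α..τ, ∫ x, ψ1 x * S.J t x, ?_,
      fun τ hτ => hεU ?_⟩
    · refine Continuous.continuousOn (Continuous.add ?_ ?_)
      · exact param_cs_continuous (L := 2 * R) (by fun_prop) (fun t x hx => by simp [χ.out x hx])
      · exact intervalIntegral.continuous_primitive (fun a b => ii1.intervalIntegrable a b) α
    · simp only [hh]
      rw [Real.dist_eq, split χ τ]
      have e1 := tail χ hR1 τ hτ
      have e2 : Bψ * K / R < ε := by
        rw [div_lt_iff₀ hR0]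
        have : Bψ * K / ε < R := lt_of_lt_of_le (by linarith) (le_max_right _ _)
        rw [div_lt_iff₀ hε] at this
        linarith
      refine lt_of_le_of_lt (le_of_eq ?_) (lt_of_le_of_lt e1 e2)
      congr 1; ring
  have hstep : ∀ {R : ℝ} (χ : Cut B R) (hR : 1 ≤ R) (hRL : L ≤ R), ∀ s t, h s - h t =
      (∫ x, (1 - χ.c x) * ψ x * (S.e s x - S.e t x)) - ∫ τ in t..s, ∫ x, ψ x * χ.c1 x * S.J τ x := by
    intro R χ hR hRL s t
    have cc := χ.cont
    have cc1 := χ.cont1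
    have key := S.energy_cs hp (z := fun x => ψ x * χ.c x) (z1 := fun x => ψ1 x * χ.c x + ψ x * χ.c1 x)
      (L := 2 * R) (fun x => (d0 x).mul (χ.d0 x)) (by fun_prop) (by fun_prop)
      (fun x hx => by simp [χ.out x hx]) (fun x hx => by simp [χ.out x hx, χ.out1 x hx]) t s
    have hz1 : ∀ τ x, (ψ1 x * χ.c x + ψ x * χ.c1 x) * S.J τ x
        = ψ1 x * S.J τ x + ψ x * χ.c1 x * S.J τ x := by
      intro τ x
      rcases le_or_gt |x| R with hx | hx
      · rw [χ.one x hx, χ.in1 x hx]; ring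
      · rw [s1 x (hRL.trans_lt hx)]; ring
    simp only [hz1] at key
    have ii2 : Continuous (fun t => ∫ x, ψ x * χ.c1 x * S.J t x) :=
      param_cs_continuous (L := 2 * R) (by fun_prop) (fun t x hx => by simp [χ.out1 x hx])
    have e1 : ∀ τ, ∫ x, (ψ1 x * S.J τ x + ψ x * χ.c1 x * S.J τ x)
        = (∫ x, ψ1 x * S.J τ x) + ∫ x, ψ x * χ.c1 x * S.J τ x := by
      intro τ
      have cJτ := sl cJ τ
      exact integral_add (integrable_cs (L := L) (by fun_prop) fun x hx => by simp [s1 x hx])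
        (integrable_cs (L := 2 * R) (by fun_prop) fun x hx => by simp [χ.out1 x hx])
    simp only [e1] at key
    rw [intervalIntegral.integral_add (ii1.intervalIntegrable _ _) (ii2.intervalIntegrable _ _)] at key
    have e2 : ∫ x, (1 - χ.c x) * ψ x * (S.e s x - S.e t x)
        = (∫ x, (1 - χ.c x) * ψ x * S.e s x) - ∫ x, (1 - χ.c x) * ψ x * S.e t x := by
      rw [← integral_sub (itl χ s) (itl χ t)]
      congr 1; ext x; ring
    have e3 := intervalIntegral.integral_add_adjacent_intervals
      (ii1.intervalIntegrable (μ := volume) α t) (ii1.intervalIntegrable (μ := volume) t s)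
    simp only [hh]
    rw [e2, split χ s, split χ t, ← e3]
    linarith
  set F : ℕ → Set ℝ := fun n => {t | t ∈ Set.Icc α β ∧ S.decN n t} with hF
  have hcov : Set.uIcc α β ⊆ ⋃ n, F n := by
    intro t ht
    rw [Set.uIcc_of_le hαβ] at ht
    obtain ⟨N, hN⟩ := S.dec t
    obtain ⟨n, hn⟩ := exists_nat_ge N
    refine Set.mem_iUnion.2 ⟨n, ht, fun x => ?_⟩
    have hle : N / (1 + x ^ 2) ≤ n / (1 + x ^ 2) := by gcongr
    obtain ⟨h0, h1, h2, h3⟩ := hN x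
    exact ⟨h0.trans hle, h1.trans hle, h2.trans hle, h3.trans hle⟩
  have hder : ∀ n, ∀ t ∈ F n, HasDerivWithinAt h 0 (F n) t := by
    rintro n t ⟨ht, htn⟩
    obtain ⟨Kt, hKt0, hKt⟩ := V_lip hp hLB' ht
    obtain ⟨Kj, hKj0, hKj⟩ := J_dec (S := S) hp t
    set C1 := (Bψ * (B + 1) * n + Bψ * (n : ℝ) ^ (p - 1) * (2 * n)) * √π * Kt with hC1
    set C2 := Bψ * B * (Kj * π) with hC2
    have hC10 : 0 ≤ C1 := by positivity
    have hC20 : 0 ≤ C2 := by positivity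
    rw [hasDerivWithinAt_iff_isLittleO, Asymptotics.isLittleO_iff]
    intro ε hε
    set R := max (max 1 L) (2 * (C1 + C2) / ε) with hR
    have hR1 : 1 ≤ R := (le_max_left _ _).trans (le_max_left _ _)
    have hRL : L ≤ R := (le_max_right _ _).trans (le_max_left _ _)
    have hRe : (C1 + C2) / R ≤ ε / 2 := by
      have : 2 * (C1 + C2) / ε ≤ R := le_max_right _ _
      rw [div_le_iff₀ hε] at this
      rw [div_le_iff₀ (by linarith)]
      linarith
    have hR0 : 0 < R := by linarith
    obtain ⟨χ⟩ := hcut R hR1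
    have cc1 := χ.cont1
    have cJt := sl cJ t
    have ii2 : Continuous (fun t => ∫ x, ψ x * χ.c1 x * S.J t x) :=
      param_cs_continuous (L := 2 * R) (by fun_prop) (fun t x hx => by simp [χ.out1 x hx])
    have hGt : |∫ x, ψ x * χ.c1 x * S.J t x| ≤ C2 / R := by
      have := norm_integral_le_of_norm_le (integrable_inv_one_add_sq.const_mul (Bψ * (B / R) * Kj))
        (f := fun x => ψ x * χ.c1 x * S.J t x) (Filter.Eventually.of_forall fun x => by
          rw [Real.norm_eq_abs, abs_mul, abs_mul, mul_assoc (Bψ * (B / R))]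
          exact mul_le_mul (mul_le_mul (hB x) (χ.b1 x) (abs_nonneg _) hBψ) (hKj x) (abs_nonneg _)
            (by positivity))
      rw [integral_const_mul, integral_univ_inv_one_add_sq, Real.norm_eq_abs] at this
      refine this.trans (le_of_eq ?_)
      rw [hC2]; ring
    have hev : ∀ᶠ τ in nhds t, |∫ x, ψ x * χ.c1 x * S.J τ x| < C2 / R + ε / 2 :=
      (ii2.abs.tendsto t).eventually (gt_mem_nhds (by linarith))
    obtain ⟨δ, hδ, hev⟩ := Metric.eventually_nhds_iff.1 hev
    have hball : ∀ᶠ s in nhdsWithin t (F n), dist s t < δ :=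
      mem_nhdsWithin_of_mem_nhds (Metric.ball_mem_nhds t hδ)
    filter_upwards [hball, self_mem_nhdsWithin] with s hs hsF
    obtain ⟨hsI, hsn⟩ := hsF
    rw [smul_zero, sub_zero, hstep χ hR1 hRL, Real.norm_eq_abs, Real.norm_eq_abs]
    have q1 := tail_diff hp hB0 hR1 χ d0 c c1 hB (fun x hx => s1 x (hRL.trans_lt hx)) hsn htn
    have q2 : |∫ τ in t..s, ∫ x, ψ x * χ.c1 x * S.J τ x| ≤ (C2 / R + ε / 2) * |s - t| := by
      rw [← Real.norm_eq_abs]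
      refine intervalIntegral.norm_integral_le_of_norm_le_const fun τ hτ => ?_
      refine (hev ?_).le
      rw [Real.dist_eq] at hs ⊢
      exact lt_of_le_of_lt (Set.abs_sub_left_of_mem_uIcc (Set.uIoc_subset_uIcc hτ)) hs
    have q3 := hKt s hsI
    have q4 : (Bψ * (B + 1) * n + Bψ * (n : ℝ) ^ (p - 1) * (2 * n)) * √π / R * S.V t s
        ≤ C1 / R * |s - t| := by
      have : C1 / R * |s - t| = (Bψ * (B + 1) * n + Bψ * (n : ℝ) ^ (p - 1) * (2 * n)) * √π / R
        * (Kt * |s - t|) := by rw [hC1]; ring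
      rw [this]
      gcongr
    refine (abs_sub _ _).trans ((add_le_add (q1.trans q4) q2).trans ?_)
    have : (C1 / R * |s - t| + (C2 / R + ε / 2) * |s - t|) = ((C1 + C2) / R + ε / 2) * |s - t| := by
      ring
    rw [this]
    gcongr
    linarith
  have hfin := const_of_null (by rwa [Set.uIcc_of_le hαβ]) F hcov hder
  simp only [hh, intervalIntegral.integral_same] at hfin
  linarith

lemma energy_const_le (hp : 1 < p) {a b : ℝ} (hab : a ≤ b) (hLB : S.LB (Set.Icc a b)) :
    S.En a = S.En b := by
  have := energy_id hp hab hLB (ψ := fun _ => 1) (ψ1 := fun _ => 0) (L := 0) (Bψ := 1)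
    (fun x => hasDerivAt_const x _) (by fun_prop) (by fun_prop) (by simp) (by simp)
  simp only [one_mul, zero_mul, integral_zero, intervalIntegral.integral_zero, neg_zero] at this
  unfold En; linarith

lemma energy_const (hp : 1 < p) {a b : ℝ} (hLB : S.LB (Set.uIcc a b)) : S.En a = S.En b := by
  rcases le_total a b with h | h
  · rw [Set.uIcc_of_le h] at hLB
    exact energy_const_le hp h hLB
  · rw [Set.uIcc_of_ge h] at hLB
    exact (energy_const_le hp h hLB).symm

end Sol


namespace Sol
variable {p : ℝ} {S : Sol p}

lemma Mass_pos (hp : 1 < p) {t y : ℝ} (hy : S.u t y ≠ 0) : 0 < S.Mass t := by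
  unfold Mass
  have cu := sl S.cu t
  rw [integral_pos_iff_support_of_nonneg (fun x => sq_nonneg _) (S.int_u2 hp t)]
  refine IsOpen.measure_pos volume ?_ ⟨y, by simpa using hy⟩
  exact (cu.pow 2).isOpen_support

lemma den_int (hp : 1 < p) (t : ℝ) : ∫ x, S.den t x = S.Mass t + S.En t :=
  integral_add (S.int_u2 hp t) (S.int_e hp t)

lemma nonzero_all (hp : 1 < p) {C : ℝ} {x₀ : ℝ → ℝ}
    (hC : ∀ t, ∫ x, |x - x₀ t| * S.den t x ≤ C) {t0 y0 : ℝ} (hy0 : S.u t0 y0 ≠ 0) (b : ℝ) :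
    ∃ y, S.u b y ≠ 0 := by
  by_contra hb
  push Not at hb
  have hZc : IsClosed {t | ∀ y, S.u t y = 0} := by
    rw [Set.ofPred_forall]
    refine isClosed_iInter fun y => isClosed_eq ?_ continuous_const
    exact S.cu.comp (by fun_prop : Continuous fun t : ℝ => (t, y))
  have hcpt : IsCompact ({t | ∀ y, S.u t y = 0} ∩ Set.uIcc b t0) := isCompact_uIcc.inter_left hZc
  obtain ⟨a, ⟨haZ, hab⟩, hmin⟩ := hcpt.exists_isMinOn ⟨b, hb, Set.left_mem_uIcc⟩
    (f := fun t => |t - t0|) (by fun_prop)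
  simp only [Set.mem_ofPred_eq] at haZ
  have hne : ∀ t ∈ Set.uIcc a t0, t ≠ a → ∃ y, S.u t y ≠ 0 := by
    intro t ht hta
    by_contra hz
    push Not at hz
    have h1 : |a - t0| ≤ |t - t0| := hmin ⟨hz, Set.uIcc_subset_uIcc_right hab ht⟩
    apply hta
    rcases Set.mem_uIcc.1 ht with ⟨h2, h3⟩ | ⟨h2, h3⟩
    · rw [abs_of_nonpos (by linarith), abs_of_nonpos (by linarith)] at h1
      linarith
    · rw [abs_of_nonneg (by linarith), abs_of_nonneg (by linarith)] at h1
      linarith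
  have hpos := Mass_pos hp hy0
  have hE0 : ∀ t, 0 ≤ S.En t := fun t => integral_nonneg fun x => S.e_nonneg hp t x
  have hden : ∀ t ∈ Set.uIcc a t0, ∫ x, S.den t x ≤ S.Mass t0 + S.En t0 := by
    intro t ht
    by_cases hta : t = a
    · subst hta
      have h1 : ∀ x, S.den t x = 0 := by
        intro x
        have h2 : S.ux t x = 0 := by
          refine (S.dx0 t x).unique ?_
          have : S.u t = fun _ => 0 := funext haZ
          rw [this]
          exact hasDerivAt_const x _
        unfold den e nlF
        rw [haZ, h2, abs_zero, Real.zero_rpow (by linarith)]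
        simp
      simp only [h1, integral_zero]
      have := hE0 t0
      linarith
    · have hLB : S.LB (Set.uIcc t t0) := by
        refine S.LB_compact hp hC isCompact_uIcc fun s hs => ?_
        refine hne s (Set.uIcc_subset_uIcc_right ht hs) ?_
        rintro rfl
        apply hta
        rcases Set.mem_uIcc.1 ht with ⟨h2, h3⟩ | ⟨h2, h3⟩ <;>
          rcases Set.mem_uIcc.1 hs with ⟨h4, h5⟩ | ⟨h4, h5⟩ <;> linarith
      rw [den_int hp, mass_const hp hLB, energy_const hp hLB]
  have hKt : S.WD t0 ≤ S.WD t0 := le_rfl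
  obtain ⟨B, hB0, hcut⟩ := exists_cut
  have hzero : S.Mass t0 = 0 := by
    refine eq_zero_of_le_div (R0 := 1)
      (Q := B * (8 + 2 * p) * (S.Mass t0 + S.En t0) * |t0 - a| + S.WD t0) fun R hR => ?_
    have hR0 : 0 < R := by linarith
    obtain ⟨χ⟩ := hcut R hR
    have key := S.mass_cs hp χ.d0 χ.d1 χ.cont χ.cont1 χ.cont2 χ.out χ.out1 χ.out2 a t0
    have h0 : ∫ x, χ.c x * S.u a x ^ 2 = 0 := by simp [haZ]
    rw [h0, sub_zero] at key
    have hfl : |∫ t in a..t0, ∫ x, (χ.c1 x * (3 * S.ux t x ^ 2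
      + 2 * p * nlF p (S.u t x)) + 2 * χ.c2 x * (S.u t x * S.ux t x))|
        ≤ B / R * (8 + 2 * p) * (S.Mass t0 + S.En t0) * |t0 - a| := by
      rw [← Real.norm_eq_abs]
      refine intervalIntegral.norm_integral_le_of_norm_le_const fun t ht => ?_
      have := norm_integral_le_of_norm_le ((S.int_den hp t).const_mul (B / R * (8 + 2 * p)))
        (f := fun x => χ.c1 x * (3 * S.ux t x ^ 2 + 2 * p * nlF p (S.u t x))
          + 2 * χ.c2 x * (S.u t x * S.ux t x))
        (Filter.Eventually.of_forall fun x => flux_le hp t x _ _ _ (χ.b1 x) (χ.b2 x))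
      rw [integral_const_mul] at this
      refine this.trans ?_
      have := hden t (Set.uIoc_subset_uIcc ht)
      gcongr
    have i1 : Integrable (fun x => χ.c x * S.u t0 x ^ 2) :=
      integrable_cs (L := 2 * R) (χ.cont.mul ((sl S.cu t0).pow 2)) fun x hx => by simp [χ.out x hx]
    have tl := int_tail hp hKt zero_le_one hR0
      (g := fun x => S.u t0 x ^ 2 - χ.c x * S.u t0 x ^ 2) (fun x => by
        have := S.e_nonneg hp t0 x
        rw [abs_of_nonneg (by nlinarith [χ.le1 x, sq_nonneg (S.u t0 x)]), one_mul]
        unfold den; nlinarith [χ.nn x, sq_nonneg (S.u t0 x)])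
      (fun x hx => by simp [χ.one x hx])
    rw [integral_sub (S.int_u2 hp t0) i1, key] at tl
    have hQ : (B * (8 + 2 * p) * (S.Mass t0 + S.En t0) * |t0 - a| + S.WD t0) / R
      = B / R * (8 + 2 * p) * (S.Mass t0 + S.En t0) * |t0 - a| + 1 * S.WD t0 / R := by ring
    rw [hQ]
    have t1 := abs_le.1 tl
    have t2 := abs_le.1 hfl
    change |∫ x, S.u t0 x ^ 2| ≤ _
    rw [abs_le]
    constructor <;> linarith
  linarith

end Sol


namespace Sol
variable {p : ℝ} {S : Sol p}

lemma F_lower (hp : 1 < p) {C M : ℝ} (hC : 0 < C) (hM : 0 < M) :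
    ∃ φ, 0 < φ ∧ ∀ t x0, ∫ x, |x - x0| * S.den t x ≤ C → S.Mass t = M →
      φ ≤ ∫ x, nlF p (S.u t x) := by
  set L := 2 * C / M with hL
  have hL0 : 0 < L := by positivity
  set δ := √(M / (8 * L)) with hδ
  have hδ0 : 0 < δ := Real.sqrt_pos.2 (by positivity)
  have hδ2 : δ ^ 2 = M / (8 * L) := Real.sq_sqrt (by positivity)
  have hq : 0 < δ ^ (p - 1) := by positivity
  refine ⟨M / 4 * δ ^ (p - 1) / (p + 1), by positivity, fun t x0 hb hm => ?_⟩
  have hind : Integrable ((Set.Icc (x0 - L) (x0 + L)).indicator (fun _ : ℝ => δ ^ 2)) :=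
    (integrable_indicator_iff measurableSet_Icc).2 continuousOn_const.integrableOn_Icc
  have i1 := (S.int_abs_den hp t x0).const_mul (1 / L)
  have i3 := (S.int_F hp t).const_mul ((p + 1) / δ ^ (p - 1))
  have hpt : ∀ x, S.u t x ^ 2 ≤ 1 / L * (|x - x0| * S.den t x)
      + (Set.Icc (x0 - L) (x0 + L)).indicator (fun _ => δ ^ 2) x
      + (p + 1) / δ ^ (p - 1) * nlF p (S.u t x) := by
    intro x
    have hd := S.den_nonneg hp t x
    have hF := nlF_nonneg hp (S.u t x)
    have he := S.e_nonneg hp t x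
    have hF' : 0 ≤ (p + 1) / δ ^ (p - 1) * nlF p (S.u t x) := by positivity
    have hD' : 0 ≤ 1 / L * (|x - x0| * S.den t x) := by positivity
    by_cases hx : x ∈ Set.Icc (x0 - L) (x0 + L)
    · rw [Set.indicator_of_mem hx]
      rcases le_or_gt |S.u t x| δ with h | h
      · have : S.u t x ^ 2 ≤ δ ^ 2 := by
          rw [← sq_abs]; gcongr
        linarith
      · have h1 := mul_nlf hp (S.u t x)
        have h2 : δ ^ (p - 1) ≤ |S.u t x| ^ (p - 1) :=
          Real.rpow_le_rpow hδ0.le h.le (by linarith)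
        have h3 : S.u t x ^ 2 ≤ (p + 1) / δ ^ (p - 1) * nlF p (S.u t x) := by
          rw [div_mul_eq_mul_div, ← h1, le_div_iff₀ hq]
          unfold nlf
          have := mul_le_mul_of_nonneg_left h2 (sq_nonneg (S.u t x))
          linarith
        have := sq_nonneg δ
        linarith
    · rw [Set.indicator_of_notMem hx]
      have hx' : L ≤ |x - x0| := by
        by_contra h'
        rw [not_le, abs_lt] at h'
        exact hx ⟨by linarith [h'.1], by linarith [h'.2]⟩
      have h1 : S.u t x ^ 2 ≤ S.den t x := by unfold den; linarith
      have h2 : S.den t x ≤ 1 / L * (|x - x0| * S.den t x) := by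
        rw [one_div_mul_eq_div, le_div_iff₀ hL0, mul_comm]
        gcongr
      linarith
  have hint := integral_mono (S.int_u2 hp t) (int_add (int_add i1 hind) i3) hpt
  rw [integral_add (int_add i1 hind) i3, integral_add i1 hind, integral_const_mul,
    integral_const_mul, integral_indicator measurableSet_Icc, setIntegral_const,
    Real.volume_real_Icc_of_le (by linarith), smul_eq_mul, hδ2] at hint
  unfold Mass at hm
  rw [hm] at hint
  have e1 : 1 / L * ∫ x, |x - x0| * S.den t x ≤ M / 2 := by
    calc _ ≤ 1 / L * C := by gcongr
      _ = M / 2 := by rw [hL]; field_simp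
  have e2 : (x0 + L - (x0 - L)) * (M / (8 * L)) = M / 4 := by field_simp; ring
  rw [e2] at hint
  have e3 : M / 4 ≤ (p + 1) / δ ^ (p - 1) * ∫ x, nlF p (S.u t x) := by linarith
  rw [div_mul_eq_mul_div, le_div_iff₀ hq] at e3
  rw [div_le_iff₀ (by linarith)]
  linarith

lemma s_aux {s p : ℝ} (hs0 : 0 ≤ s) (hs3 : s ^ 2 = 3) (hp : s ≤ p) :
    0 ≤ s * (p + 1) - p - 3 := by
  have h1 : 1 ≤ s := by
    by_contra h
    have : s ^ 2 < 1 := by nlinarith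
    linarith
  nlinarith [mul_nonneg (sub_nonneg.2 h1) (sub_nonneg.2 hp)]

set_option maxHeartbeats 1000000 in
lemma alg_key {p s A F M E K B φ k1 k2 k3 k4 k6 k7 η r x lam : ℝ} (hs0 : 0 ≤ s)
    (hs3 : s ^ 2 = 3) (hs2 : s ≤ 2) (hp : s ≤ p) (hA : 0 ≤ A) (hF : 0 ≤ F) (hM : 0 < M)
    (hK : 0 ≤ K) (hE : E = 1 / 2 * A + F) (hφ : 0 ≤ φ) (hφF : φ ≤ F) (hr : 0 ≤ r) (hη : η = B * r)
    (hB : 0 ≤ B) (h1 : k1 ≤ A) (h1' : A - 2 * K * r ≤ k1) (h2 : k2 ≤ F) (h2' : F - K * r ≤ k2)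
    (h3 : |k3| ≤ η * (M + E)) (hx : x = s * A + (p + 1) * F) (hlam : lam * M = x)
    (h4 : 2 * lam * (s * (k1 + k3) + (p + 1) * k2) - lam ^ 2 * M ≤ k4)
    (h6 : -(η * E) ≤ k6) (h7 : |k7| ≤ η * E) :
    1 / 2 * (p - 1) ^ 2 * φ ^ 2 - ((2 * s + p + 1) * E * (s * (2 * K + B * (M + E)) + (p + 1) * K)
      + 3 * M * B * E + 2 * E * B * (M + E)) * r ≤
      M * (1 / 2 * k4 + (2 - s) * k6 + k7) - E * (3 * k1 + 2 * p * k2 + 2 * k3) := by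
  have hp0 : 0 ≤ p := hs0.trans hp
  have hE0 : 0 ≤ E := by rw [hE]; positivity
  have hx0 : 0 ≤ x := by rw [hx]; positivity
  have hη0 : 0 ≤ η := by rw [hη]; positivity
  obtain ⟨h3a, h3b⟩ := abs_le.1 h3
  obtain ⟨h7a, h7b⟩ := abs_le.1 h7
  have hxX : x ≤ (2 * s + p + 1) * E := by
    rw [hx, hE]; nlinarith [mul_nonneg hs0 hF, mul_nonneg hp0 hA]
  set δ := (s * (2 * K + B * (M + E)) + (p + 1) * K) * r with hδ
  have hδ0 : 0 ≤ δ := by positivity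
  have hy : x - δ ≤ s * (k1 + k3) + (p + 1) * k2 := by
    have a1 : s * (A - 2 * K * r - η * (M + E)) ≤ s * (k1 + k3) :=
      mul_le_mul_of_nonneg_left (by linarith) hs0
    have a2 : (p + 1) * (F - K * r) ≤ (p + 1) * k2 := mul_le_mul_of_nonneg_left h2' (by linarith)
    have a3 : x - δ = s * (A - 2 * K * r - η * (M + E)) + (p + 1) * (F - K * r) := by
      rw [hx, hδ, hη]; ring
    linarith
  have hk4 : x ^ 2 - 2 * x * δ ≤ M * k4 := by
    have b1 := mul_le_mul_of_nonneg_left h4 hM.le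
    have b2 : M * (2 * lam * (s * (k1 + k3) + (p + 1) * k2) - lam ^ 2 * M)
        = 2 * x * (s * (k1 + k3) + (p + 1) * k2) - x ^ 2 := by rw [← hlam]; ring
    have b3 := mul_le_mul_of_nonneg_left hy (by linarith : 0 ≤ 2 * x)
    rw [b2] at b1
    linarith
  have hI1 : E * (3 * k1 + 2 * p * k2 + 2 * k3) ≤ E * (3 * A + 2 * p * F + 2 * (η * (M + E))) := by
    refine mul_le_mul_of_nonneg_left ?_ hE0
    have := mul_le_mul_of_nonneg_left h2 (by linarith : 0 ≤ 2 * p)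
    linarith
  have hk6 : -(2 * (η * E)) ≤ (2 - s) * k6 := by
    have c1 := mul_le_mul_of_nonneg_left h6 (by linarith : 0 ≤ 2 - s)
    nlinarith [mul_nonneg hs0 (mul_nonneg hη0 hE0)]
  have hk67 : M * (-(3 * (η * E))) ≤ M * ((2 - s) * k6 + k7) :=
    mul_le_mul_of_nonneg_left (by linarith) hM.le
  have hxδ : x * δ ≤ (2 * s + p + 1) * E * δ := mul_le_mul_of_nonneg_right hxX hδ0
  have hmain : 1 / 2 * (p - 1) ^ 2 * φ ^ 2 ≤ 1 / 2 * x ^ 2 - E * (3 * A + 2 * p * F) := by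
    have e1 : 1 / 2 * x ^ 2 - E * (3 * A + 2 * p * F)
        = (s * (p + 1) - p - 3) * (A * F) + 1 / 2 * (p - 1) ^ 2 * F ^ 2 := by
      have : x ^ 2 = 3 * A ^ 2 + 2 * s * (p + 1) * (A * F) + (p + 1) ^ 2 * F ^ 2 := by
        rw [hx, ← hs3]; ring
      rw [this, hE]; ring
    have e2 : 0 ≤ s * (p + 1) - p - 3 := by
      exact s_aux hs0 hs3 hp
    have e3 : φ ^ 2 ≤ F ^ 2 := by gcongr
    rw [e1]
    have := mul_nonneg e2 (mul_nonneg hA hF)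
    have := mul_le_mul_of_nonneg_left e3 (by positivity : 0 ≤ 1 / 2 * (p - 1) ^ 2)
    linarith
  have hfin : ((2 * s + p + 1) * E * (s * (2 * K + B * (M + E)) + (p + 1) * K)
      + 3 * M * B * E + 2 * E * B * (M + E)) * r
      = (2 * s + p + 1) * E * δ + M * (3 * (η * E)) + E * (2 * (η * (M + E))) := by
    rw [hδ, hη]; ring
  rw [hfin]
  linarith

set_option maxHeartbeats 4000000 in
lemma key_ineq (hp : √3 ≤ p) {B K M E φ : ℝ} (hB : 0 < B) (hK : 0 ≤ K) (hM : 0 < M) (hφ : 0 ≤ φ) :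
    ∃ Q, ∀ t, S.WD t ≤ K → S.Mass t = M → S.En t = E → φ ≤ ∫ x, nlF p (S.u t x) →
      ∀ R, 1 ≤ R → ∀ χ : Cut B R, 1 / 2 * (p - 1) ^ 2 * φ ^ 2 - Q * R⁻¹ ≤
        M * (∫ x, χ.c x * S.J t x) - E * ∫ x, (χ.c x * (3 * S.ux t x ^ 2
          + 2 * p * nlF p (S.u t x)) + 2 * χ.c1 x * (S.u t x * S.ux t x)) := by
  set s := √3 with hs
  have hs3 : s ^ 2 = 3 := Real.sq_sqrt (by norm_num)
  have hs0 : 0 ≤ s := Real.sqrt_nonneg _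
  have hs2 : s ≤ 2 := by nlinarith
  have hs1 : 1 < s := by nlinarith
  have hp1 : 1 < p := by linarith
  refine ⟨(2 * s + p + 1) * E * (s * (2 * K + B * (M + E)) + (p + 1) * K)
      + 3 * M * B * E + 2 * E * B * (M + E), fun t hKt hMt hEt hφF R hR χ => ?_⟩
  have hR0 : 0 < R := by linarith
  have cc := χ.cont
  have cc1 := χ.cont1
  have cc2 := χ.cont2
  have cu := sl S.cu t
  have cux := sl S.cux t
  have cuxx := sl S.cuxx t
  have cf : Continuous (fun x => nlf p (S.u t x)) := (nlf_continuous hp1).comp cu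
  have cF : Continuous (fun x => nlF p (S.u t x)) := (nlF_continuous hp1).comp cu
  have cf' : Continuous (fun x => p * |S.u t x| ^ (p - 1)) := (nlf'_continuous hp1).comp cu
  have ics : ∀ {g : ℝ → ℝ}, Continuous g → Integrable (fun x => χ.c x * g x) := fun hg =>
    integrable_cs (L := 2 * R) (by fun_prop) fun x hx => by simp [χ.out x hx]
  have ics1 : ∀ {g : ℝ → ℝ}, Continuous g → Integrable (fun x => χ.c1 x * g x) := fun hg =>
    integrable_cs (L := 2 * R) (by fun_prop) fun x hx => by simp [χ.out1 x hx]
  have ics2 : ∀ {g : ℝ → ℝ}, Continuous g → Integrable (fun x => χ.c2 x * g x) := fun hg =>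
    integrable_cs (L := 2 * R) (by fun_prop) fun x hx => by simp [χ.out2 x hx]
  have hEA : E = 1 / 2 * (∫ x, S.ux t x ^ 2) + ∫ x, nlF p (S.u t x) := by
    rw [← hEt]
    unfold En e
    rw [integral_add ((S.int_ux2 hp1 t).const_mul _) (S.int_F hp1 t), integral_const_mul]
  have hFnn : ∀ x, 0 ≤ nlF p (S.u t x) := fun x => nlF_nonneg hp1 _
  have hI1 : ∫ x, (χ.c x * (3 * S.ux t x ^ 2
          + 2 * p * nlF p (S.u t x)) + 2 * χ.c1 x * (S.u t x * S.ux t x))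
      = 3 * (∫ x, χ.c x * S.ux t x ^ 2) + 2 * p * (∫ x, χ.c x * nlF p (S.u t x))
        + 2 * ∫ x, χ.c1 x * (S.u t x * S.ux t x) := by
    rw [← integral_const_mul, ← integral_const_mul, ← integral_const_mul,
      ← integral_add ((ics (by fun_prop)).const_mul _) ((ics cF).const_mul _), ← integral_add
      (int_add ((ics (by fun_prop)).const_mul _) ((ics cF).const_mul _))
      ((ics1 (by fun_prop)).const_mul _)]
    congr 1; ext x; ring
  have hI2 : ∫ x, χ.c x * S.J t x = 1 / 2 * (∫ x, χ.c x * (-(s * S.uxx t x) + nlf p (S.u t x)) ^ 2)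
      + (2 - s) * (∫ x, χ.c x * -(S.uxx t x * nlf p (S.u t x)))
      + ∫ x, χ.c2 x * (nlF p (S.u t x) - 1 / 2 * S.ux t x ^ 2) := by
    rw [S.flux_J hp1 t χ.d0 χ.d1 cc cc1 cc2 χ.out χ.out1 χ.out2,
      ← integral_const_mul, ← integral_const_mul,
      ← integral_add ((ics (by fun_prop)).const_mul _) ((ics (by fun_prop)).const_mul _),
      ← integral_add
      (int_add ((ics (by fun_prop)).const_mul _) ((ics (by fun_prop)).const_mul _))
      (ics2 (by fun_prop))]
    congr 1; ext x
    linear_combination (-(1 / 2) * χ.c x * S.uxx t x ^ 2) * hs3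
  rw [hI1, hI2]
  have hy : ∫ x, χ.c x * (S.u t x * (-(s * S.uxx t x) + nlf p (S.u t x)))
      = s * ((∫ x, χ.c x * S.ux t x ^ 2) + ∫ x, χ.c1 x * (S.u t x * S.ux t x))
        + (p + 1) * ∫ x, χ.c x * nlF p (S.u t x) := by
    rw [← integral_add (ics (by fun_prop)) (ics1 (by fun_prop)),
      ← S.flux_ua t χ.d0 cc cc1 χ.out χ.out1, ← integral_const_mul, ← integral_const_mul,
      ← integral_add ((ics (by fun_prop)).const_mul _) ((ics (by fun_prop)).const_mul _)]
    congr 1; ext x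
    have := mul_nlf hp1 (S.u t x)
    linear_combination (χ.c x) * this
  have hden : ∫ x, S.den t x = M + E := by rw [den_int hp1, hMt, hEt]
  refine alg_key (k1 := ∫ x, χ.c x * S.ux t x ^ 2) (k2 := ∫ x, χ.c x * nlF p (S.u t x))
    (A := ∫ x, S.ux t x ^ 2) (F := ∫ x, nlF p (S.u t x)) (K := K) (B := B) (η := B * R⁻¹)
    (x := s * (∫ x, S.ux t x ^ 2) + (p + 1) * ∫ x, nlF p (S.u t x))
    (lam := (s * (∫ x, S.ux t x ^ 2) + (p + 1) * ∫ x, nlF p (S.u t x)) / M)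
    hs0 hs3 hs2 hp (integral_nonneg fun x => sq_nonneg _) (integral_nonneg hFnn) hM hK hEA hφ
    hφF (by positivity) rfl hB.le ?_ ?_ ?_ ?_ ?_ rfl (by field_simp) ?_ ?_ ?_
  · refine integral_mono (ics (by fun_prop)) (S.int_ux2 hp1 t) fun x => ?_
    exact mul_le_of_le_one_left (sq_nonneg _) (χ.le1 x)
  · have := int_tail hp1 hKt zero_le_two hR0 (g := fun x => S.ux t x ^ 2 - χ.c x * S.ux t x ^ 2)
      (fun x => by
        have h0 := S.den_nonneg hp1 t x
        have h1 := sq_le_den (S := S) hp1 t x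
        rw [abs_of_nonneg (by nlinarith [χ.le1 x, sq_nonneg (S.ux t x)])]
        nlinarith [χ.nn x, sq_nonneg (S.ux t x), sq_nonneg (S.u t x)])
      (fun x hx => by simp [χ.one x hx])
    rw [integral_sub (S.int_ux2 hp1 t) (ics (by fun_prop)), div_eq_mul_inv] at this
    linarith [(abs_le.1 this).2]
  · refine integral_mono (ics cF) (S.int_F hp1 t) fun x => ?_
    exact mul_le_of_le_one_left (hFnn x) (χ.le1 x)
  · have := int_tail hp1 hKt zero_le_one hR0
      (g := fun x => nlF p (S.u t x) - χ.c x * nlF p (S.u t x))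
      (fun x => by
        have h0 := hFnn x
        rw [abs_of_nonneg (by nlinarith [χ.le1 x])]
        unfold den e
        nlinarith [χ.nn x, sq_nonneg (S.ux t x), sq_nonneg (S.u t x)])
      (fun x hx => by simp [χ.one x hx])
    rw [integral_sub (S.int_F hp1 t) (ics (by fun_prop)), div_eq_mul_inv, one_mul] at this
    linarith [(abs_le.1 this).2]
  · have := norm_integral_le_of_norm_le ((S.int_den hp1 t).const_mul (B / R))
      (f := fun x => χ.c1 x * (S.u t x * S.ux t x)) (Filter.Eventually.of_forall fun x => by
        rw [Real.norm_eq_abs, abs_mul]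
        refine mul_le_mul (χ.b1 x) ?_ (abs_nonneg _) (by positivity)
        have h1 := sq_le_den (S := S) hp1 t x
        rw [abs_le]
        constructor <;> nlinarith [sq_nonneg (S.u t x + S.ux t x), sq_nonneg (S.u t x - S.ux t x)])
    rw [integral_const_mul, hden, div_eq_mul_inv] at this
    exact this
  · rw [← hy]
    set lam := (s * (∫ x, S.ux t x ^ 2) + (p + 1) * ∫ x, nlF p (S.u t x)) / M with hlam
    have h0 : 0 ≤ ∫ x, χ.c x * ((-(s * S.uxx t x) + nlf p (S.u t x)) - lam * S.u t x) ^ 2 :=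
      integral_nonneg fun x => mul_nonneg (χ.nn x) (sq_nonneg _)
    have h1 : ∫ x, χ.c x * ((-(s * S.uxx t x) + nlf p (S.u t x)) - lam * S.u t x) ^ 2
        = (∫ x, χ.c x * (-(s * S.uxx t x) + nlf p (S.u t x)) ^ 2)
        + (-2 * lam) * (∫ x, χ.c x * (S.u t x * (-(s * S.uxx t x) + nlf p (S.u t x))))
        + lam ^ 2 * ∫ x, χ.c x * S.u t x ^ 2 := by
      rw [← integral_const_mul, ← integral_const_mul,
        ← integral_add (ics (by fun_prop)) ((ics (by fun_prop)).const_mul _), ← integral_add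
        (int_add (ics (by fun_prop)) ((ics (by fun_prop)).const_mul _))
        ((ics (by fun_prop)).const_mul _)]
      congr 1; ext x; ring
    have h2 : ∫ x, χ.c x * S.u t x ^ 2 ≤ M := by
      rw [← hMt]
      refine integral_mono (ics (by fun_prop)) (S.int_u2 hp1 t) fun x => ?_
      exact mul_le_of_le_one_left (sq_nonneg _) (χ.le1 x)
    have h3 := mul_le_mul_of_nonneg_left h2 (sq_nonneg lam)
    linarith
  · rw [S.flux_ab hp1 t χ.d0 χ.d1 cc cc1 cc2 χ.out χ.out1 χ.out2, ← hEt]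
    unfold En
    rw [← integral_const_mul, ← integral_neg]
    refine integral_mono ((S.int_e hp1 t).const_mul _).neg
      (int_sub (ics (by fun_prop)) (ics2 cF)) fun x => ?_
    have h1 := (abs_le.1 (χ.b2 x)).2
    rw [div_eq_mul_inv] at h1
    have h2 : χ.c2 x * nlF p (S.u t x) ≤ B * R⁻¹ * S.e t x := by
      refine (mul_le_mul_of_nonneg_right h1 (hFnn x)).trans ?_
      refine mul_le_mul_of_nonneg_left ?_ (by positivity)
      unfold e; nlinarith [sq_nonneg (S.ux t x)]
    have h3 : 0 ≤ χ.c x * (p * |S.u t x| ^ (p - 1) * S.ux t x ^ 2) :=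
      mul_nonneg (χ.nn x) (by positivity)
    simp only
    linarith
  · have := norm_integral_le_of_norm_le ((S.int_e hp1 t).const_mul (B / R))
      (f := fun x => χ.c2 x * (nlF p (S.u t x) - 1 / 2 * S.ux t x ^ 2))
      (Filter.Eventually.of_forall fun x => by
        rw [Real.norm_eq_abs, abs_mul]
        refine mul_le_mul (χ.b2 x) ?_ (abs_nonneg _) (by positivity)
        have := hFnn x
        unfold e
        rw [abs_le]
        constructor <;> nlinarith [sq_nonneg (S.ux t x)])
    rw [integral_const_mul, div_eq_mul_inv] at this
    rw [← hEt]
    exact this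

end Sol


namespace Sol
variable {p : ℝ} {S : Sol p}

lemma final_contra (hp : √3 ≤ p) {C : ℝ} {x₀ : ℝ → ℝ} (hC0 : 0 < C)
    (hC : ∀ t, ∫ x, |x - x₀ t| * S.den t x ≤ C) {t0 y0 : ℝ} (hy0 : S.u t0 y0 ≠ 0) : False := by
  have hp1 : 1 < p := by
    have : 1 < √3 := by rw [Real.lt_sqrt (by norm_num)]; norm_num
    linarith
  have hne := nonzero_all hp1 hC hy0
  have hLB : ∀ a b, S.LB (Set.uIcc a b) := fun a b =>
    S.LB_compact hp1 hC isCompact_uIcc fun t _ => hne t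
  obtain ⟨y1, hy1⟩ := hne 0
  have hM : 0 < S.Mass 0 := Mass_pos hp1 hy1
  set M := S.Mass 0 with hMdef
  set E := S.En 0 with hEdef
  have hMt : ∀ t, S.Mass t = M := fun t => (mass_const hp1 (hLB 0 t)).symm
  have hEt : ∀ t, S.En t = E := fun t => (energy_const hp1 (hLB 0 t)).symm
  have hE0 : 0 ≤ E := integral_nonneg fun x => S.e_nonneg hp1 0 x
  obtain ⟨φ, hφ, hφF⟩ := F_lower (S := S) hp1 hC0 hM
  obtain ⟨B, hB, hcut⟩ := exists_cut
  set c := 1 / 2 * (p - 1) ^ 2 * φ ^ 2 with hc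
  have hc0 : 0 < c := by
    have : 0 < p - 1 := by linarith
    positivity
  set T := (2 * (E + M) * C + 1) * 2 / c with hT
  have hT0 : 0 < T := by positivity
  have hLBT : S.LB (Set.Icc 0 T) := by
    have := hLB 0 T
    rwa [Set.uIcc_of_le hT0.le] at this
  obtain ⟨K, hK0, hK⟩ := hLBT
  obtain ⟨Q, hQ⟩ := key_ineq (S := S) (E := E) hp hB hK0.le hM hφ.le
  set R := max 1 (2 * Q / c) with hR
  have hR1 : 1 ≤ R := le_max_left _ _
  have hR0 : 0 < R := by linarith
  have hQR : Q * R⁻¹ ≤ c / 2 := by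
    have h1 : 2 * Q / c ≤ R := le_max_right _ _
    rw [div_le_iff₀ hc0] at h1
    rw [← div_eq_mul_inv, div_le_iff₀ hR0]
    linarith
  obtain ⟨χ⟩ := hcut R hR1
  have cc := χ.cont
  have cc1 := χ.cont1
  set ψ : ℝ → ℝ := fun x => ∫ y in (0:ℝ)..x, χ.c y with hψ
  have dψ : ∀ x, HasDerivAt ψ (χ.c x) x := fun x =>
    intervalIntegral.integral_hasDerivAt_right (cc.intervalIntegrable _ _)
      (cc.stronglyMeasurableAtFilter _ _) cc.continuousAt
  have cψ : Continuous ψ := continuous_iff_continuousAt.2 fun x => (dψ x).continuousAt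
  have hψB : ∀ x, |ψ x| ≤ ∫ y, χ.c y := fun x => by
    have ic : Integrable χ.c := integrable_cs cc χ.out
    have h1 := intervalIntegral.norm_integral_le_integral_norm_uIoc
      (f := χ.c) (a := 0) (b := x) (μ := volume)
    refine h1.trans ((setIntegral_le_integral ic.norm
      (Filter.Eventually.of_forall fun y => norm_nonneg _)).trans (le_of_eq ?_))
    congr 1; ext y
    rw [Real.norm_eq_abs, abs_of_nonneg (χ.nn y)]
  have hψL : ∀ x z, |ψ x - ψ z| ≤ |x - z| := fun x z => by
    have h1 : ψ x - ψ z = ∫ y in z..x, χ.c y := by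
      rw [hψ]
      exact intervalIntegral.integral_interval_sub_left (cc.intervalIntegrable _ _)
        (cc.intervalIntegrable _ _)
    rw [h1]
    have := intervalIntegral.norm_integral_le_of_norm_le_const (f := χ.c) (a := z) (b := x) (C := 1)
      (fun y _ => by rw [Real.norm_eq_abs, abs_of_nonneg (χ.nn y)]; exact χ.le1 y)
    simpa using this
  -- the functional `W`
  have hW : ∀ t, |E * (∫ x, ψ x * S.u t x ^ 2) - M * ∫ x, ψ x * S.e t x| ≤ (E + M) * C := by
    intro t
    have cu := sl S.cu t
    have ce := sl (S.ce hp1) t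
    have hbd : ∀ x, |ψ x| * S.den t x ≤ (∫ y, χ.c y) * ((1 + |x|) * S.den t x) := fun x => by
      refine mul_le_mul (hψB x) (S.le_wden hp1 t x) (S.den_nonneg hp1 t x)
        ((abs_nonneg _).trans (hψB 0))
    have i1 : Integrable (fun x => ψ x * S.u t x ^ 2) := by
      refine S.int_of_le hp1 t _ (by fun_prop) fun x => le_trans ?_ (hbd x)
      rw [abs_mul, abs_of_nonneg (sq_nonneg (S.u t x))]
      refine mul_le_mul_of_nonneg_left ?_ (abs_nonneg _)
      have := S.e_nonneg hp1 t x
      unfold den; linarith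
    have i2 : Integrable (fun x => ψ x * S.e t x) := by
      refine S.int_of_le hp1 t _ (by fun_prop) fun x => le_trans ?_ (hbd x)
      rw [abs_mul, abs_of_nonneg (S.e_nonneg hp1 t x)]
      refine mul_le_mul_of_nonneg_left ?_ (abs_nonneg _)
      unfold den; linarith [sq_nonneg (S.u t x)]
    have hmm : ∫ x, S.u t x ^ 2 = M := hMt t
    have hee : ∫ x, S.e t x = E := hEt t
    have e1 : E * (∫ x, ψ x * S.u t x ^ 2) - M * ∫ x, ψ x * S.e t x
        = ∫ x, (E * (ψ x * S.u t x ^ 2 - ψ (x₀ t) * S.u t x ^ 2)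
          - M * (ψ x * S.e t x - ψ (x₀ t) * S.e t x)) := by
      rw [integral_sub ((int_sub i1 ((S.int_u2 hp1 t).const_mul _)).const_mul _)
        ((int_sub i2 ((S.int_e hp1 t).const_mul _)).const_mul _),
        integral_const_mul, integral_const_mul,
        integral_sub i1 ((S.int_u2 hp1 t).const_mul _),
        integral_sub i2 ((S.int_e hp1 t).const_mul _),
        integral_const_mul, integral_const_mul, hmm, hee]
      ring
    rw [e1]
    have := norm_integral_le_of_norm_le ((S.int_abs_den hp1 t (x₀ t)).const_mul (E + M))
      (f := fun x => E * (ψ x * S.u t x ^ 2 - ψ (x₀ t) * S.u t x ^ 2)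
          - M * (ψ x * S.e t x - ψ (x₀ t) * S.e t x))
      (Filter.Eventually.of_forall fun x => by
        have h1 : E * (ψ x * S.u t x ^ 2 - ψ (x₀ t) * S.u t x ^ 2)
          - M * (ψ x * S.e t x - ψ (x₀ t) * S.e t x)
          = (ψ x - ψ (x₀ t)) * (E * S.u t x ^ 2 - M * S.e t x) := by ring
        have he := S.e_nonneg hp1 t x
        have hu := sq_nonneg (S.u t x)
        have h2 : |E * S.u t x ^ 2 - M * S.e t x| ≤ (E + M) * S.den t x := by
          unfold den
          have a1 := mul_nonneg hE0 he
          have a2 := mul_nonneg hE0 hu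
          have a3 := mul_nonneg hM.le he
          have a4 := mul_nonneg hM.le hu
          rw [abs_le]
          constructor <;> nlinarith
        rw [Real.norm_eq_abs, h1, abs_mul]
        calc |ψ x - ψ (x₀ t)| * |E * S.u t x ^ 2 - M * S.e t x|
            ≤ |x - x₀ t| * ((E + M) * S.den t x) :=
              mul_le_mul (hψL _ _) h2 (abs_nonneg _) (abs_nonneg _)
          _ = _ := by ring)
    rw [integral_const_mul] at this
    exact this.trans (mul_le_mul_of_nonneg_left (hC t) (by linarith))
  have m1 := mass_id hp1 (hLB 0 T) dψ χ.d0 cψ cc cc1 hψB χ.out χ.out1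
  have m2 := energy_id hp1 hT0.le ⟨K, hK0, hK⟩ dψ cψ cc hψB χ.out
  have q1 : Continuous (fun t => ∫ x, (χ.c x * (3 * S.ux t x ^ 2
      + 2 * p * nlF p (S.u t x)) + 2 * χ.c1 x * (S.u t x * S.ux t x))) := by
    have a1 := S.cu
    have a2 := S.cux
    have a3 := S.cuF hp1
    refine param_cs_continuous (L := 2 * R) (by fun_prop) fun t x hx => ?_
    rw [χ.out x hx, χ.out1 x hx]; ring
  have q2 : Continuous (fun t => ∫ x, χ.c x * S.J t x) := by
    have a1 := S.cJ hp1
    refine param_cs_continuous (L := 2 * R) (by fun_prop) fun t x hx => ?_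
    rw [χ.out x hx]; ring
  have hlow : T * (c / 2) ≤ ∫ t in (0:ℝ)..T, (M * (∫ x, χ.c x * S.J t x)
      - E * ∫ x, (χ.c x * (3 * S.ux t x ^ 2
      + 2 * p * nlF p (S.u t x)) + 2 * χ.c1 x * (S.u t x * S.ux t x))) := by
    have h1 : ∫ t in (0:ℝ)..T, c / 2 = T * (c / 2) := by simp; ring
    rw [← h1]
    refine intervalIntegral.integral_mono_on hT0.le (by simp)
      (((q2.const_mul M).sub (q1.const_mul E)).intervalIntegrable _ _) fun t ht => ?_
    have := hQ t (hK t ht) (hMt t) (hEt t) (hφF t (x₀ t) (hC t) (hMt t)) R hR1 χ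
    linarith
  rw [intervalIntegral.integral_sub ((q2.const_mul M).intervalIntegrable _ _)
    ((q1.const_mul E).intervalIntegrable _ _), intervalIntegral.integral_const_mul,
    intervalIntegral.integral_const_mul] at hlow
  have hTc : T * (c / 2) = 2 * (E + M) * C + 1 := by rw [hT]; field_simp
  have w0 := (abs_le.1 (hW 0)).1
  have wT := (abs_le.1 (hW T)).2
  rw [hTc] at hlow
  have n1 := congrArg (fun z => E * z) m1
  have n2 := congrArg (fun z => M * z) m2
  linarith

end Sol

theorem tao_dispersion_estimate
    (p : ℝ) (hp : Real.sqrt 3 ≤ p)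
    (u : ℝ → ℝ → ℝ)
    (hsmooth : ContDiff ℝ (⊤ : ℕ∞) (fun q : ℝ × ℝ => u q.1 q.2))
    (hschwartz : ∀ t : ℝ, ∃ f : SchwartzMap ℝ ℝ, ∀ x : ℝ, u t x = f x)
    (hpde : ∀ t x : ℝ,
      deriv (fun s => u s x) t + iteratedDeriv 3 (fun y => u t y) x
        = deriv (fun y => |u t y| ^ (p - 1) * u t y) x)
    (hnz : u ≠ 0)
    (x₀ : ℝ → ℝ) :
    ∀ C : ℝ, ∃ t : ℝ,
      C < ∫ x : ℝ, |x - x₀ t| *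
        ((u t x) ^ 2 + ((1 / 2) * (deriv (fun y => u t y) x) ^ 2
          + |u t x| ^ (p + 1) / (p + 1))) := by
  intro C
  by_contra hcon
  push Not at hcon
  have hp1 : 1 < p := by
    have : 1 < √3 := by rw [Real.lt_sqrt (by norm_num)]; norm_num
    linarith
  obtain ⟨S, rfl⟩ := exists_sol hp1 u hsmooth hschwartz hpde
  have hnz' : ∃ t0 y0, S.u t0 y0 ≠ 0 := by
    by_contra h
    push Not at h
    exact hnz (funext fun t => funext fun y => h t y)
  obtain ⟨t0, y0, hy0⟩ := hnz'
  refine Sol.final_contra (S := S) (x₀ := x₀) hp (C := max C 1) (by positivity) (fun t => ?_) hy0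
  refine le_trans (le_of_eq ?_) ((hcon t).trans (le_max_left _ _))
  congr 1; ext x
  have h1 : deriv (fun y => S.u t y) x = S.ux t x := (S.dx0 t x).deriv
  rw [h1]
  rfl
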